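/- Let i ∈ Σ_{n+1}. If there exists a sequence (σ_1, …, σ_n) ∈ {A, D}^n such that ind_{σ_k}(C_{σ_{k+1}} ∘ ⋯ ∘ C_{σ_n}(i)) = 0 for all k = n, n−1, …, 1, then for every dominant integral weight λ the string polytope Δ_i(λ) is unimodularly equivalent to the Gelfand–Cetlin polytope GC(λ). -/

import Mathlib

open scoped Classical

noncomputable section

namespace StringPolytope

/-! ### Words, reduced words, two-moves -/

/-- the simple transposition `s_a = (a, a+1)` acting on `ℕ` (wires are `1, …, n+1`). -/
def sTrans (a : ℕ) : Equiv.Perm ℕ := Equiv.swap a (a + 1)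

/-- product `s_{i₁} ⋯ s_{i_N}` of the simple transpositions of a word. -/
def wordProd (w : List ℕ) : Equiv.Perm ℕ := (w.map sTrans).prod

/-- the longest element `w₀` of the symmetric group on `{1, …, n+1}`,
sending `k ↦ n + 2 - k` there and fixing everything else. -/
def longestPerm (n : ℕ) : Equiv.Perm ℕ :=
  Function.Involutive.toPerm
    (fun k => if 1 ≤ k ∧ k ≤ n + 1 then n + 2 - k else k)
    (by intro k; dsimp only; split_ifs <;> omega)

/-- `w ∈ Σ_{n+1}`: a reduced word of the longest element of `S_{n+1}`,
i.e. a word over `[n] = {1,…,n}` of length `N = n(n+1)/2` whose product is `w₀`. -/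
def IsReduced (n : ℕ) (w : List ℕ) : Prop :=
  w.length = n * (n + 1) / 2 ∧ (∀ a ∈ w, 1 ≤ a ∧ a ≤ n) ∧ wordProd w = longestPerm n

/-- a single 2-move: exchange two adjacent letters `(a, b)` with `|a - b| > 1`. -/
def TwoMoveStep (w w' : List ℕ) : Prop :=
  ∃ u v a b, (a + 1 < b ∨ b + 1 < a) ∧ w = u ++ a :: b :: v ∧ w' = u ++ b :: a :: v

/-- 2-move equivalence of words. -/
def TwoMoveEquiv : List ℕ → List ℕ → Prop := Relation.ReflTransGen TwoMoveStep

/-- `A_n = (1, 2, …, n)`. -/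
def ascWord (n : ℕ) : List ℕ := (List.range n).map (· + 1)

/-- `D_n = (n, n-1, …, 1)`. -/
def descWord (n : ℕ) : List ℕ := (ascWord n).reverse

/-! ### The wiring diagram -/

/-- the letter `i_j` of `w` (1-based index `j`); the node `t_j` lies in column `i_j`. -/
def letterAt (w : List ℕ) (j : ℕ) : ℕ := w.getD (j - 1) 0

/-- `1 ≤ j ≤ N`: `t_j` is an actual node of the diagram. -/
def ValidNode (w : List ℕ) (j : ℕ) : Prop := 1 ≤ j ∧ j ≤ w.length

/-- the column-to-wire assignment just above node `t_j`
(at the top of the diagram, wire `k` is in column `k`). -/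
def stateAbove (w : List ℕ) (j : ℕ) : Equiv.Perm ℕ := wordProd (w.take (j - 1))

/-- the column-to-wire assignment just below node `t_j`. -/
def stateBelow (w : List ℕ) (j : ℕ) : Equiv.Perm ℕ := wordProd (w.take j)

/-- one of the two wires crossing at node `t_j` (the one leaving upward-left). -/
def wireX (w : List ℕ) (j : ℕ) : ℕ := stateAbove w j (letterAt w j)

/-- the other wire crossing at node `t_j` (the one leaving upward-right). -/
def wireY (w : List ℕ) (j : ℕ) : ℕ := stateAbove w j (letterAt w j + 1)

/-- the node `t_j` lies on the wire `ℓ_r`. -/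
def NodeOnWire (w : List ℕ) (j r : ℕ) : Prop := wireX w j = r ∨ wireY w j = r

/-- given one wire `r` at node `t_j`, the other wire crossing there. -/
def otherWire (w : List ℕ) (j r : ℕ) : ℕ := if wireX w j = r then wireY w j else wireX w j

/-- the column of wire `ℓ_r` at the height of node `t_j`. -/
def wireCol (w : List ℕ) (j r : ℕ) : ℕ := (stateBelow w j).symm r

/-- node `t_j` lies strictly below the wire `ℓ_{n+1}`
(which runs from the bottom-left corner to the top-right corner). -/
def BelowWireLast (n : ℕ) (w : List ℕ) (j : ℕ) : Prop :=
  wireCol w j (n + 1) < letterAt w j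

/-- node `t_j` lies strictly above the wire `ℓ_{n+1}`. -/
def AboveWireLast (n : ℕ) (w : List ℕ) (j : ℕ) : Prop :=
  letterAt w j + 1 < wireCol w j (n + 1)

/-- node `t_j` lies strictly below the wire `ℓ_1`
(which runs from the bottom-right corner to the top-left corner). -/
def BelowWireOne (w : List ℕ) (j : ℕ) : Prop :=
  letterAt w j + 1 < wireCol w j 1

/-- node `t_j` lies strictly above the wire `ℓ_1`. -/
def AboveWireOne (w : List ℕ) (j : ℕ) : Prop :=
  wireCol w j 1 < letterAt w j

/-! ### Rigorous (Gleizer–Postnikov) paths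

A path in `G(i, k)` is encoded by `k` together with the list of its switching
nodes, in order of travel.  Wires `ℓ_1, …, ℓ_k` are oriented upward
(decreasing node index) and the remaining wires downward. -/

/-- the (1-based indices of the) nodes lying on wire `ℓ_r`, in order of increasing index. -/
def nodesOn (w : List ℕ) (r : ℕ) : List ℕ :=
  ((List.range w.length).map (· + 1)).filter (fun j => decide (NodeOnWire w j r))

/-- nodes on wire `ℓ_r` strictly between the nodes `t_a` and `t_b`. -/
def segList (w : List ℕ) (r a b : ℕ) : List ℕ :=
  (nodesOn w r).filter (fun j => decide (min a b < j ∧ j < max a b))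

/-- nodes on wire `ℓ_r` strictly below the node `t_a`. -/
def tailList (w : List ℕ) (r a : ℕ) : List ℕ :=
  (nodesOn w r).filter (fun j => decide (a < j))

/-- a forbidden fragment of `G(i, k)`: the path passes straight through node `t_j`
travelling along the wire `ℓ_r`, where the other wire `ℓ_b` crossing there has the same
orientation as `ℓ_r` and (`r < b` if both upward, `r > b` if both downward). -/
def Forbidden (w : List ℕ) (k j r : ℕ) : Prop :=
  (r ≤ k ∧ otherWire w j r ≤ k ∧ r < otherWire w j r) ∨
  (k < r ∧ k < otherWire w j r ∧ otherWire w j r < r)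

/-- travelling in `G(i,k)`: currently on wire `ℓ_r` at node `t_a` (just switched there),
with future switching nodes `ms`; the travel is legal and ends at `L_{k+1}`. -/
def TravelOK (w : List ℕ) (k : ℕ) : ℕ → ℕ → List ℕ → Prop
  | r, a, [] => r = k + 1 ∧ ∀ j ∈ tailList w r a, ¬ Forbidden w k j r
  | r, a, m :: ms =>
      ValidNode w m ∧ NodeOnWire w m r ∧
      (if r ≤ k then m < a else a < m) ∧
      (∀ j ∈ segList w r a m, ¬ Forbidden w k j r) ∧
      TravelOK w k (otherWire w m r) m ms

/-- all nodes visited after the switch at node `t_a` onto wire `ℓ_r`. -/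
def visitTail (w : List ℕ) : ℕ → ℕ → List ℕ → List ℕ
  | r, a, [] => tailList w r a
  | r, a, m :: ms => segList w r a m ++ m :: visitTail w (otherWire w m r) m ms

/-- the list of all nodes visited by the path (switching nodes and straight passes). -/
def visitList (w : List ℕ) (k : ℕ) : List ℕ → List ℕ
  | [] => []
  | m :: ms => tailList w k m ++ m :: visitTail w (otherWire w m k) m ms

/-- `(k, ms)` encodes a rigorous (Gleizer–Postnikov) path in `G(i, k)`:
it starts at `L_k` going up the wire `ℓ_k`, switches wires exactly at the nodes
listed in `ms`, respects the orientation, ends at `L_{k+1}`, contains no forbidden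
fragment and passes through each node at most once. -/
def IsGPPath (n : ℕ) (w : List ℕ) (k : ℕ) (ms : List ℕ) : Prop :=
  1 ≤ k ∧ k ≤ n ∧
  (match ms with
   | [] => False
   | m :: rest =>
       ValidNode w m ∧ NodeOnWire w m k ∧
       (∀ j ∈ tailList w k m, ¬ Forbidden w k j k) ∧
       TravelOK w k (otherWire w m k) m rest) ∧
  (visitList w k ms).Nodup

/-- the set `GP(i)` of all rigorous paths of `G(i)`. -/
def GP (n : ℕ) (w : List ℕ) : Set (ℕ × List ℕ) := {p | IsGPPath n w p.1 p.2}

/-- `|GP(i)|`, the number of rigorous paths. -/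
def numGP (n : ℕ) (w : List ℕ) : ℕ := (GP n w).ncard

/-- the successive switches of a path: `(node, from-wire, to-wire)`. -/
def pathSwitches (w : List ℕ) : ℕ → List ℕ → List (ℕ × ℕ × ℕ)
  | _, [] => []
  | r, m :: ms => (m, r, otherWire w m r) :: pathSwitches w (otherWire w m r) ms

/-- the wire-expression of a path: the successive wires travelled. -/
def wireSeq (w : List ℕ) : ℕ → List ℕ → List ℕ
  | r, [] => [r]
  | r, m :: ms => r :: wireSeq w (otherWire w m r) ms

/-- the peaks of a path: switching nodes where the path switches from an
upward wire to a downward wire. -/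
def peaks (w : List ℕ) (k : ℕ) (ms : List ℕ) : List ℕ :=
  ((pathSwitches w k ms).filter (fun e => decide (e.2.1 ≤ k ∧ k < e.2.2))).map (·.1)

/-! ### String cone, `λ`-cone, string polytope -/

/-- `N = n(n+1)/2`, the number of nodes. -/
abbrev Dim (n : ℕ) : ℕ := n * (n + 1) / 2

/-- the coefficient `a_j` of `t_j` in the string inequality of the path `(k, ms)`:
`+1` if the path switches at `t_j` from `ℓ_r` to `ℓ_s` with `r < s`,
`-1` if it switches with `r > s`, and `0` otherwise. -/
def coeff (w : List ℕ) (k : ℕ) (ms : List ℕ) (j : ℕ) : ℝ :=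
  ((pathSwitches w k ms).map (fun e =>
    if e.1 = j then (if e.2.1 < e.2.2 then (1 : ℝ) else -1) else 0)).sum

/-- the (primitive inward normal) coefficient vector of the string inequality of a path. -/
def normalVec (n : ℕ) (w : List ℕ) (p : ℕ × List ℕ) : Fin (Dim n) → ℝ :=
  fun j => coeff w p.1 p.2 ((j : ℕ) + 1)

/-- the left-hand side `∑ a_j t_j` of the string inequality of the path `p`. -/
def stringIneq (n : ℕ) (w : List ℕ) (p : ℕ × List ℕ) (t : Fin (Dim n) → ℝ) : ℝ :=
  ∑ j : Fin (Dim n), normalVec n w p j * t j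

/-- the string cone `C_i ⊆ ℝ^N`. -/
def stringCone (n : ℕ) (w : List ℕ) : Set (Fin (Dim n) → ℝ) :=
  {t | ∀ p ∈ GP n w, 0 ≤ stringIneq n w p t}

/-- the polyhedron cut out by all string inequalities except the one of `p₀`. -/
def stringConeExcept (n : ℕ) (w : List ℕ) (p₀ : ℕ × List ℕ) : Set (Fin (Dim n) → ℝ) :=
  {t | ∀ p ∈ GP n w, p ≠ p₀ → 0 ≤ stringIneq n w p t}

/-- the coefficient `a_k` in the `λ`-inequality of node `t_j`:
`1` if `t_k` is one column left or right of `t_j`, `-2` if in the same column. -/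
def lamCoeff (w : List ℕ) (j k : ℕ) : ℝ :=
  if letterAt w k = letterAt w j then -2
  else if letterAt w k = letterAt w j + 1 ∨ letterAt w k + 1 = letterAt w j then 1
  else 0

/-- the `λ`-inequality of node `t_{j+1}`:
`t_j ≤ λ_{i_j} + ∑_{k > j} a_k t_k`. -/
def LamIneq (n : ℕ) (w : List ℕ) (lam : ℕ → ℤ) (j : Fin (Dim n)) (t : Fin (Dim n) → ℝ) : Prop :=
  t j ≤ (lam (letterAt w ((j : ℕ) + 1)) : ℝ) +
    ∑ k : Fin (Dim n),
      (if (j : ℕ) < (k : ℕ) then lamCoeff w ((j : ℕ) + 1) ((k : ℕ) + 1) else 0) * t k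

/-- the `λ`-cone `C_i^λ ⊆ ℝ^N`. -/
def lamCone (n : ℕ) (w : List ℕ) (lam : ℕ → ℤ) : Set (Fin (Dim n) → ℝ) :=
  {t | ∀ j, LamIneq n w lam j t}

/-- the polyhedron cut out by all `λ`-inequalities except the one of `j₀`. -/
def lamConeExcept (n : ℕ) (w : List ℕ) (lam : ℕ → ℤ) (j₀ : Fin (Dim n)) :
    Set (Fin (Dim n) → ℝ) :=
  {t | ∀ j, j ≠ j₀ → LamIneq n w lam j t}

/-- the string polytope `Δ_i(λ) = C_i ∩ C_i^λ`. -/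
def stringPolytope (n : ℕ) (w : List ℕ) (lam : ℕ → ℤ) : Set (Fin (Dim n) → ℝ) :=
  stringCone n w ∩ lamCone n w lam

/-- `λ = λ_1 ϖ_1 + ⋯ + λ_n ϖ_n` is a dominant integral weight: all `λ_j ≥ 0`. -/
def Dominant (n : ℕ) (lam : ℕ → ℤ) : Prop := ∀ j, 1 ≤ j → j ≤ n → 0 ≤ lam j

/-- `λ` is a regular dominant integral weight: all `λ_j > 0`. -/
def RegularDominant (n : ℕ) (lam : ℕ → ℤ) : Prop := ∀ j, 1 ≤ j → j ≤ n → 0 < lam j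

/-! ### Unimodular equivalence, Gelfand–Cetlin polytope, facets -/

/-- `P` and `Q` are unimodularly equivalent: `Q = M(P) + v` with `M ∈ GL(m, ℤ)`, `v ∈ ℤ^m`. -/
def UnimodEquiv {m : ℕ} (P Q : Set (Fin m → ℝ)) : Prop :=
  ∃ (M : Matrix (Fin m) (Fin m) ℤ) (v : Fin m → ℤ), IsUnit M.det ∧
    Q = (fun x i => (∑ j, (M i j : ℝ) * x j) + (v i : ℝ)) '' P

/-- the entry `x_{k,j}` (`1 ≤ j ≤ k ≤ n+1`) of a Gelfand–Cetlin pattern, where the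
top row is `x_{n+1,j} = λ_j + ⋯ + λ_n` and `x_{n+1,n+1} = 0`; the pair `(k, j)` is
encoded as the coordinate `k(k-1)/2 + (j-1)` of `ℝ^N`. -/
def gcX (n : ℕ) (lam : ℕ → ℤ) (x : Fin (Dim n) → ℝ) (k j : ℕ) : ℝ :=
  if k = n + 1 then (if j ≤ n then ∑ t ∈ Finset.Icc j n, (lam t : ℝ) else 0)
  else if h : k * (k - 1) / 2 + (j - 1) < Dim n then x ⟨k * (k - 1) / 2 + (j - 1), h⟩ else 0

/-- the Gelfand–Cetlin polytope `GC(λ) ⊆ ℝ^N`. -/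
def GCPolytope (n : ℕ) (lam : ℕ → ℤ) : Set (Fin (Dim n) → ℝ) :=
  {x | ∀ k j, 1 ≤ k → k ≤ n → 1 ≤ j → j ≤ k →
      gcX n lam x k j ≤ gcX n lam x (k + 1) j ∧
      gcX n lam x (k + 1) (j + 1) ≤ gcX n lam x k j}

/-- a face of a convex set: a convex extreme subset. -/
def IsFaceSet {m : ℕ} (S F : Set (Fin m → ℝ)) : Prop := IsExtreme ℝ S F ∧ Convex ℝ F

/-- a facet: a maximal proper face. -/
def IsFacet {m : ℕ} (S F : Set (Fin m → ℝ)) : Prop :=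
  IsFaceSet S F ∧ F ≠ S ∧ ∀ G, IsFaceSet S G → G ≠ S → F ⊆ G → F = G

/-- the number of facets. -/
def numFacets {m : ℕ} (S : Set (Fin m → ℝ)) : ℕ := {F | IsFacet S F}.ncard

/-- combinatorial equivalence: an inclusion-preserving bijection between face lattices. -/
def CombEquiv {m : ℕ} (S T : Set (Fin m → ℝ)) : Prop :=
  ∃ e : {F // IsFaceSet S F} ≃ {F // IsFaceSet T F},
    ∀ F G : {F // IsFaceSet S F}, F.1 ⊆ G.1 ↔ (e F).1 ⊆ (e G).1

/-! ### Indices, contractions and extensions -/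

/-- the `D`-index `ind_D(i) = |i_D^+|` for a decomposition `i ∼ i_D^- D_n i_D^+`
(independent of the decomposition). -/
def indD (n : ℕ) (w : List ℕ) : ℕ :=
  sInf {s | ∃ u v : List ℕ, v.length = s ∧ TwoMoveEquiv w (u ++ descWord n ++ v)}

/-- the `A`-index `ind_A(i) = |i_A^+|` for a decomposition `i ∼ i_A^- A_n i_A^+`. -/
def indA (n : ℕ) (w : List ℕ) : ℕ :=
  sInf {s | ∃ u v : List ℕ, v.length = s ∧ TwoMoveEquiv w (u ++ ascWord n ++ v)}

/-- `w'` is a `D`-contraction `C_D(w) = i_D^- (i_D^+ - 1)` of `w ∈ Σ_{n+1}`. -/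
def IsContractionD (n : ℕ) (w w' : List ℕ) : Prop :=
  ∃ u v : List ℕ, TwoMoveEquiv w (u ++ descWord n ++ v) ∧ w' = u ++ v.map (· - 1)

/-- `w'` is an `A`-contraction `C_A(w) = (i_A^- - 1) i_A^+` of `w ∈ Σ_{n+1}`. -/
def IsContractionA (n : ℕ) (w w' : List ℕ) : Prop :=
  ∃ u v : List ℕ, TwoMoveEquiv w (u ++ ascWord n ++ v) ∧ w' = u.map (· - 1) ++ v

/-- the `D`-extension `E_D(s) : Σ_{n+1} → Σ_{n+2}`,
`i = i^-(s) i^+(s) ↦ i^-(s) D_{n+1} (i^+(s) + 1)` where `|i^+(s)| = s`. -/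
def extD (n : ℕ) (s : ℕ) (w : List ℕ) : List ℕ :=
  w.take (w.length - s) ++ descWord (n + 1) ++ (w.drop (w.length - s)).map (· + 1)

/-- the `A`-extension `E_A(s) : Σ_{n+1} → Σ_{n+2}`,
`i = i^-(s) i^+(s) ↦ (i^-(s) + 1) A_{n+1} i^+(s)`. -/
def extA (n : ℕ) (s : ℕ) (w : List ℕ) : List ℕ :=
  (w.take (w.length - s)).map (· + 1) ++ ascWord (n + 1) ++ w.drop (w.length - s)

/-- there exists `(σ_1, …, σ_n) ∈ {A, D}^n` (here `true = D`, `false = A`) such that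
`ind_{σ_k}(C_{σ_{k+1}} ∘ ⋯ ∘ C_{σ_n}(i)) = 0` for all `k = n, …, 1`. -/
def SimplicialWord (n : ℕ) (w : List ℕ) : Prop :=
  ∃ (σ : ℕ → Bool) (c : ℕ → List ℕ), c n = w ∧
    ∀ k, 1 ≤ k → k ≤ n →
      (if σ k then IsContractionD k (c k) (c (k - 1)) ∧ indD k (c k) = 0
       else IsContractionA k (c k) (c (k - 1)) ∧ indA k (c k) = 0)


/-- the `D`-coindex `coind_D(i) = |i_D^-|`. -/
def coindD (n : ℕ) (w : List ℕ) : ℕ :=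
  sInf {s | ∃ u v : List ℕ, u.length = s ∧ TwoMoveEquiv w (u ++ descWord n ++ v)}

/-- the `A`-coindex `coind_A(i) = |i_A^-|`. -/
def coindA (n : ℕ) (w : List ℕ) : ℕ :=
  sInf {s | ∃ u v : List ℕ, u.length = s ∧ TwoMoveEquiv w (u ++ ascWord n ++ v)}

/-- the `a`-th (0-based) coordinate of a point of `ℝ^N`. -/
def entry (n : ℕ) (t : Fin (Dim n) → ℝ) (a : ℕ) : ℝ :=
  if h : a < Dim n then t ⟨a, h⟩ else 0

/-- the product of cones
`t_1 ≥ 0`, `t_2 ≥ t_3 ≥ 0`, …, `t_{N-n+1} ≥ ⋯ ≥ t_N ≥ 0` (in `ℝ^N`, 1-based: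
for `k = 1, …, n` the chain `t_{k(k-1)/2+1} ≥ ⋯ ≥ t_{k(k-1)/2+k} ≥ 0`). -/
def chainCone (n : ℕ) : Set (Fin (Dim n) → ℝ) :=
  {t | ∀ k j, 1 ≤ k → k ≤ n → 1 ≤ j → j ≤ k →
    (if j = k then 0 else entry n t (k * (k - 1) / 2 + j)) ≤
      entry n t (k * (k - 1) / 2 + (j - 1))}

/-!
Under the hypothesis, `i` is 2-move equivalent to a word made of consecutive blocks, the `κ`-th one
being a shift of `A_κ` or of `D_κ` according to `σ_κ`, and 2-moves change neither the crossings of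
the wiring diagram nor the order in which they lie on each wire. The crossings of the `κ`-th block
are those of one wire, the last wire of the block, with `κ` consecutively numbered wires, and all of
these lie on one side of the last wire of any later block. Hence a rigorous path that has left the
block in which it first switches can only switch to wires farther and farther from its end
`ℓ_{k+1}`: it switches in a single block, once at the last crossing of the block or else at two
consecutive crossings. The string inequalities are therefore
`t_{κ,1} ≥ t_{κ,2} ≥ ⋯ ≥ t_{κ,κ} ≥ 0`, one chain for each block.

Number the rows of a Gelfand–Cetlin pattern by the blocks and let the differences between row
`κ + 1` and row `κ` be `t_{κ,p} - t_{κ,p+1}`, with the choice between `x_{κ+1,j} - x_{κ,j}` and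
`x_{κ,j} - x_{κ+1,j+1}` made by `σ_κ`. This determines the pattern from the top row downwards by an
integral affine map with integral inverse. One of the two inequalities on `x_{κ,j}` is then a string
inequality. The other one is a `λ`-inequality, since the differences of consecutive entries of row
`κ + 1` obey the same recursion in `κ` as the right-hand sides of the `λ`-inequalities.
-/

/-! ### Wiring diagrams of concatenated words -/

lemma wordProd_append (u v : List ℕ) : wordProd (u ++ v) = wordProd u * wordProd v := by
  simp [wordProd]

lemma wordProd_cons (a : ℕ) (v : List ℕ) : wordProd (a :: v) = sTrans a * wordProd v := by
  simp [wordProd]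

lemma wordProd_singleton (a : ℕ) : wordProd [a] = sTrans a := by
  simp [wordProd]

lemma sTrans_apply (a c : ℕ) :
    sTrans a c = if c = a then a + 1 else if c = a + 1 then a else c := by
  simp only [sTrans, Equiv.swap_apply_def]

lemma sTrans_comm {a b : ℕ} (h : a + 1 < b ∨ b + 1 < a) :
    sTrans a * sTrans b = sTrans b * sTrans a := by
  ext c
  simp only [Equiv.Perm.mul_apply, sTrans_apply]
  split_ifs <;> omega

lemma stateAbove_one (w : List ℕ) : stateAbove w 1 = 1 := by
  simp [stateAbove, wordProd]

lemma stateAbove_length_succ (w : List ℕ) : stateAbove w (w.length + 1) = wordProd w := by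
  simp [stateAbove]

lemma stateAbove_succ {w : List ℕ} {j : ℕ} (hj : ValidNode w j) :
    stateAbove w (j + 1) = stateAbove w j * sTrans (letterAt w j) := by
  obtain ⟨i, rfl⟩ : ∃ i, j = i + 1 := ⟨j - 1, by have := hj.1; omega⟩
  have hi : i < w.length := hj.2
  simp only [stateAbove, letterAt, Nat.add_sub_cancel]
  rw [List.take_succ_eq_append_getElem hi, wordProd_append, wordProd_singleton,
    List.getD_eq_getElem _ _ hi]

lemma letterAt_mem {w : List ℕ} {j : ℕ} (hj : ValidNode w j) : letterAt w j ∈ w := by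
  have hlt : j - 1 < w.length := by have := hj.1; have := hj.2; omega
  rw [letterAt, List.getD_eq_getElem _ _ hlt]
  exact List.getElem_mem hlt

lemma exists_letterAt_eq {w : List ℕ} {a : ℕ} (ha : a ∈ w) :
    ∃ j, ValidNode w j ∧ letterAt w j = a := by
  obtain ⟨i, hi, rfl⟩ := List.mem_iff_getElem.1 ha
  exact ⟨i + 1, ⟨by omega, hi⟩, List.getD_eq_getElem _ _ hi⟩

/-- The column of the node `t_j` together with the two wires crossing there, in the order
`(column, wireX, wireY)`. -/
def nodeData (w : List ℕ) (j : ℕ) : ℕ × ℕ × ℕ := (letterAt w j, wireX w j, wireY w j)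

lemma nodeData_append_left {u : List ℕ} {j : ℕ} (hj : ValidNode u j) (v : List ℕ) :
    nodeData (u ++ v) j = nodeData u j := by
  have := hj.1
  have := hj.2
  simp only [nodeData, wireX, wireY, stateAbove, letterAt]
  rw [List.getD_append _ _ _ _ (by omega), List.take_append_of_le_length (by omega)]

lemma nodeData_append_right (u v : List ℕ) {j : ℕ} (hj : 1 ≤ j) :
    nodeData (u ++ v) (u.length + j) =
      (letterAt v j, wordProd u (wireX v j), wordProd u (wireY v j)) := by
  simp only [nodeData, wireX, wireY, stateAbove, letterAt]
  rw [show u.length + j - 1 = u.length + (j - 1) by omega,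
    List.getD_append_right _ _ _ _ (by omega), List.take_length_add_append, wordProd_append,
    Nat.add_sub_cancel_left]
  rfl

lemma nodeData_append_cons (u v : List ℕ) (a : ℕ) :
    nodeData (u ++ a :: v) (u.length + 1) = (a, wordProd u a, wordProd u (a + 1)) := by
  rw [nodeData_append_right _ _ le_rfl]
  simp [wireX, wireY, stateAbove_one, letterAt]

lemma wordProd_map_succ_succ (u : List ℕ) (c : ℕ) :
    wordProd (u.map (· + 1)) (c + 1) = wordProd u c + 1 := by
  induction u with
  | nil => simp [wordProd]
  | cons a u ih =>
    rw [List.map_cons, wordProd_cons, wordProd_cons, Equiv.Perm.mul_apply, Equiv.Perm.mul_apply,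
      ih, sTrans_apply, sTrans_apply]
    split_ifs <;> omega

lemma wordProd_map_succ_zero (u : List ℕ) : wordProd (u.map (· + 1)) 0 = 0 := by
  induction u with
  | nil => simp [wordProd]
  | cons a u ih =>
    rw [List.map_cons, wordProd_cons, Equiv.Perm.mul_apply, ih, sTrans_apply,
      if_neg (by omega), if_neg (by omega)]

lemma nodeData_map_succ {w : List ℕ} {j : ℕ} (hj : ValidNode w j) :
    nodeData (w.map (· + 1)) j = (letterAt w j + 1, wireX w j + 1, wireY w j + 1) := by
  have hlt : j - 1 < w.length := by have := hj.1; have := hj.2; omega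
  have hletter : letterAt (w.map (· + 1)) j = letterAt w j + 1 := by
    rw [letterAt, letterAt, List.getD_eq_getElem _ _ (by simpa using hlt),
      List.getD_eq_getElem _ _ hlt, List.getElem_map]
  simp only [nodeData, wireX, wireY, stateAbove, hletter, ← List.map_take,
    wordProd_map_succ_succ]

/-! ### The words `A_m` and `D_m` -/

lemma length_ascWord (m : ℕ) : (ascWord m).length = m := by simp [ascWord]

lemma length_descWord (m : ℕ) : (descWord m).length = m := by simp [descWord, ascWord]

lemma mem_ascWord {m a : ℕ} : a ∈ ascWord m ↔ 1 ≤ a ∧ a ≤ m := by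
  simp only [ascWord, List.mem_map, List.mem_range]
  exact ⟨by rintro ⟨b, hb, rfl⟩; omega, fun h => ⟨a - 1, by omega, by omega⟩⟩

lemma mem_descWord {m a : ℕ} : a ∈ descWord m ↔ 1 ≤ a ∧ a ≤ m := by
  rw [descWord, List.mem_reverse, mem_ascWord]

lemma letterAt_ascWord {m p : ℕ} (hp : 1 ≤ p) (hpm : p ≤ m) : letterAt (ascWord m) p = p := by
  rw [letterAt, List.getD_eq_getElem _ _ (by rw [length_ascWord]; omega)]
  simp only [ascWord, List.getElem_map, List.getElem_range]
  omega

lemma letterAt_descWord {m p : ℕ} (hp : 1 ≤ p) (hpm : p ≤ m) :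
    letterAt (descWord m) p = m + 1 - p := by
  rw [letterAt, List.getD_eq_getElem _ _ (by rw [length_descWord]; omega)]
  simp only [descWord, ascWord, List.getElem_reverse, List.getElem_map, List.getElem_range,
    List.length_map, List.length_range]
  omega

lemma stateAbove_ascWord {m p : ℕ} (hp : 1 ≤ p) (hpm : p ≤ m + 1) (c : ℕ) :
    stateAbove (ascWord m) p c = if c = p then 1 else if 1 ≤ c ∧ c < p then c + 1 else c := by
  induction p, hp using Nat.le_induction generalizing c with
  | base =>
    rw [stateAbove_one, Equiv.Perm.one_apply]
    split_ifs <;> omega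
  | succ p hp ih =>
    rw [stateAbove_succ ⟨hp, by rw [length_ascWord]; omega⟩, letterAt_ascWord hp (by omega),
      Equiv.Perm.mul_apply, ih (by omega), sTrans_apply]
    split_ifs <;> omega

lemma stateAbove_descWord {m p : ℕ} (hp : 1 ≤ p) (hpm : p ≤ m + 1) (c : ℕ) :
    stateAbove (descWord m) p c =
      if c = m + 2 - p then m + 1 else if m + 2 - p < c ∧ c ≤ m + 1 then c - 1 else c := by
  induction p, hp using Nat.le_induction generalizing c with
  | base =>
    rw [stateAbove_one, Equiv.Perm.one_apply]
    split_ifs <;> omega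
  | succ p hp ih =>
    rw [stateAbove_succ ⟨hp, by rw [length_descWord]; omega⟩, letterAt_descWord hp (by omega),
      Equiv.Perm.mul_apply, ih (by omega), sTrans_apply]
    split_ifs <;> omega

lemma nodeData_ascWord {m p : ℕ} (hp : 1 ≤ p) (hpm : p ≤ m) :
    nodeData (ascWord m) p = (p, 1, p + 1) := by
  simp only [nodeData, wireX, wireY, letterAt_ascWord hp hpm,
    stateAbove_ascWord hp (show p ≤ m + 1 by omega), Prod.mk.injEq]
  refine ⟨trivial, ?_, ?_⟩ <;> split_ifs <;> omega

lemma nodeData_descWord {m p : ℕ} (hp : 1 ≤ p) (hpm : p ≤ m) :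
    nodeData (descWord m) p = (m + 1 - p, m + 1 - p, m + 1) := by
  simp only [nodeData, wireX, wireY, letterAt_descWord hp hpm,
    stateAbove_descWord hp (show p ≤ m + 1 by omega), Prod.mk.injEq]
  refine ⟨trivial, ?_, ?_⟩ <;> split_ifs <;> omega

lemma wordProd_ascWord (m c : ℕ) : wordProd (ascWord m) c =
    if c = m + 1 then 1 else if 1 ≤ c ∧ c < m + 1 then c + 1 else c := by
  rw [← stateAbove_length_succ, length_ascWord, stateAbove_ascWord (by omega) le_rfl]

lemma wordProd_descWord (m c : ℕ) : wordProd (descWord m) c =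
    if c = 1 then m + 1 else if 1 < c ∧ c ≤ m + 1 then c - 1 else c := by
  rw [← stateAbove_length_succ, length_descWord, stateAbove_descWord (by omega) le_rfl]
  split_ifs <;> omega

/-! ### Two-moves -/

lemma TwoMoveStep.symm {w w' : List ℕ} (h : TwoMoveStep w w') : TwoMoveStep w' w := by
  obtain ⟨u, v, a, b, hab, rfl, rfl⟩ := h
  exact ⟨u, v, b, a, hab.symm, rfl, rfl⟩

lemma TwoMoveEquiv.symm {w w' : List ℕ} (h : TwoMoveEquiv w w') : TwoMoveEquiv w' w :=
  have : Std.Symm TwoMoveStep := ⟨fun _ _ => TwoMoveStep.symm⟩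
  Relation.ReflTransGen.stdSymm.symm _ _ h

lemma TwoMoveEquiv.append_right {w w' : List ℕ} (h : TwoMoveEquiv w w') (v : List ℕ) :
    TwoMoveEquiv (w ++ v) (w' ++ v) := by
  refine Relation.ReflTransGen.lift (· ++ v) ?_ _ _ h
  rintro _ _ ⟨u, z, a, b, hab, rfl, rfl⟩
  exact ⟨u, z ++ v, a, b, hab, by simp, by simp⟩

lemma TwoMoveEquiv.map_succ {w w' : List ℕ} (h : TwoMoveEquiv w w') :
    TwoMoveEquiv (w.map (· + 1)) (w'.map (· + 1)) := by
  refine Relation.ReflTransGen.lift (List.map (· + 1)) ?_ _ _ h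
  rintro _ _ ⟨u, z, a, b, hab, rfl, rfl⟩
  exact ⟨u.map (· + 1), z.map (· + 1), a + 1, b + 1, by omega, by simp, by simp⟩

lemma TwoMoveEquiv.perm {w w' : List ℕ} (h : TwoMoveEquiv w w') : w.Perm w' := by
  induction h with
  | refl => rfl
  | tail _ hs ih =>
    obtain ⟨u, v, a, b, -, rfl, rfl⟩ := hs
    exact ih.trans ((List.Perm.swap b a v).append_left u)

lemma TwoMoveEquiv.wordProd_eq {w w' : List ℕ} (h : TwoMoveEquiv w w') :
    wordProd w = wordProd w' := by
  induction h with
  | refl => rfl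
  | tail _ hs ih =>
    obtain ⟨u, v, a, b, hab, rfl, rfl⟩ := hs
    rw [ih, wordProd_append, wordProd_append, wordProd_cons, wordProd_cons, wordProd_cons,
      wordProd_cons, ← mul_assoc (sTrans a), sTrans_comm hab, mul_assoc (sTrans b)]

/-- Columns at distance at most one: the corresponding letters cannot be exchanged by a 2-move
(or coincide). -/
def Near (a b : ℕ) : Prop := a ≤ b + 1 ∧ b ≤ a + 1

/-- Two nodes whose vertical order is respected by 2-moves: they lie in near columns or on a
common wire. -/
def Linked (w : List ℕ) (j j' : ℕ) : Prop :=
  Near (letterAt w j) (letterAt w j') ∨ ∃ r, NodeOnWire w j r ∧ NodeOnWire w j' r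

/-- The permutation `f` of node indices is an isomorphism from the wiring diagram of `w'` to the
one of `w`: it preserves columns and crossing wires, and the order of linked nodes. -/
structure DiagramIso (w w' : List ℕ) (f : Equiv.Perm ℕ) : Prop where
  length_eq : w.length = w'.length
  validNode_iff : ∀ j, ValidNode w (f j) ↔ ValidNode w' j
  nodeData_eq : ∀ j, ValidNode w' j → nodeData w (f j) = nodeData w' j
  lt_of_linked : ∀ j j', ValidNode w' j → ValidNode w' j' → j < j' → Linked w' j j' → f j < f j'

lemma linked_congr {w w' : List ℕ} {i i' j j' : ℕ} (h : nodeData w i = nodeData w' j)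
    (h' : nodeData w i' = nodeData w' j') : Linked w i i' ↔ Linked w' j j' := by
  simp only [nodeData, Prod.mk.injEq] at h h'
  simp only [Linked, NodeOnWire, h, h']

lemma Linked.symm {w : List ℕ} {j j' : ℕ} (h : Linked w j j') : Linked w j' j :=
  h.imp And.symm fun ⟨r, hr⟩ => ⟨r, hr.symm⟩

lemma DiagramIso.refl (w : List ℕ) : DiagramIso w w 1 :=
  ⟨rfl, fun _ => Iff.rfl, fun _ _ => rfl, fun _ _ _ _ h _ => h⟩

lemma DiagramIso.trans {w w' w'' : List ℕ} {f g : Equiv.Perm ℕ} (h : DiagramIso w w' f)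
    (h' : DiagramIso w' w'' g) : DiagramIso w w'' (f * g) where
  length_eq := h.length_eq.trans h'.length_eq
  validNode_iff j := (h.validNode_iff _).trans (h'.validNode_iff j)
  nodeData_eq j hj :=
    (h.nodeData_eq _ ((h'.validNode_iff j).2 hj)).trans (h'.nodeData_eq j hj)
  lt_of_linked j j' hj hj' hlt hl :=
    h.lt_of_linked _ _ ((h'.validNode_iff j).2 hj) ((h'.validNode_iff j').2 hj')
      (h'.lt_of_linked j j' hj hj' hlt hl)
      ((linked_congr (h'.nodeData_eq j hj) (h'.nodeData_eq j' hj')).2 hl)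

lemma nodeData_append_cons_cons (u v : List ℕ) {a b : ℕ} (hab : a + 1 < b ∨ b + 1 < a) :
    nodeData (u ++ a :: b :: v) (u.length + 2) = (b, wordProd u b, wordProd u (b + 1)) := by
  have h := nodeData_append_cons (u ++ [a]) v b
  simp only [List.append_assoc, List.singleton_append, List.length_append, List.length_singleton,
    wordProd_append, wordProd_singleton, Equiv.Perm.mul_apply, sTrans_apply] at h
  rwa [if_neg (by omega), if_neg (by omega), if_neg (by omega), if_neg (by omega)] at h

lemma TwoMoveStep.nodeData_swap (u v : List ℕ) {a b : ℕ} (hab : a + 1 < b ∨ b + 1 < a) (j : ℕ)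
    (hj : ValidNode (u ++ b :: a :: v) j) :
    nodeData (u ++ a :: b :: v) (Equiv.swap (u.length + 1) (u.length + 2) j) =
      nodeData (u ++ b :: a :: v) j := by
  have hpos := hj.1
  rcases Nat.lt_trichotomy j (u.length + 1) with h | rfl | h
  · rw [Equiv.swap_apply_of_ne_of_ne (by omega) (by omega),
      nodeData_append_left ⟨hpos, by omega⟩, nodeData_append_left ⟨hpos, by omega⟩]
  · rw [Equiv.swap_apply_left, nodeData_append_cons_cons u v hab, nodeData_append_cons]
  obtain rfl | h := Nat.eq_or_lt_of_le (show u.length + 2 ≤ j from h)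
  · rw [Equiv.swap_apply_right, nodeData_append_cons_cons u v hab.symm, nodeData_append_cons]
  have hprod : wordProd (u ++ [a, b]) = wordProd (u ++ [b, a]) :=
    TwoMoveEquiv.wordProd_eq (.single ⟨u, [], a, b, hab, rfl, rfl⟩)
  have hright := fun x y : ℕ =>
    nodeData_append_right (u ++ [x, y]) v (show 1 ≤ j - (u.length + 2) by omega)
  simp only [List.append_assoc, List.cons_append, List.nil_append, List.length_append,
    List.length_cons, List.length_nil, Nat.zero_add, Nat.reduceAdd,
    show u.length + 2 + (j - (u.length + 2)) = j by omega] at hright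
  rw [Equiv.swap_apply_of_ne_of_ne (by omega) (by omega), hright, hright, hprod]

lemma not_linked_of_twoMove (u v : List ℕ) {a b : ℕ} (hab : a + 1 < b ∨ b + 1 < a) :
    ¬ Linked (u ++ a :: b :: v) (u.length + 1) (u.length + 2) := by
  have h₁ := nodeData_append_cons u (b :: v) a
  have h₂ := nodeData_append_cons_cons u v hab
  simp only [nodeData, Prod.mk.injEq] at h₁ h₂
  simp only [Linked, Near, NodeOnWire, h₁, h₂]
  rintro (h | ⟨r, h | h, h' | h'⟩)
  · omega
  all_goals
    have := (wordProd u).injective (h.trans h'.symm)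
    omega

lemma TwoMoveStep.exists_diagramIso {w w' : List ℕ} (h : TwoMoveStep w w') :
    ∃ f, DiagramIso w w' f := by
  obtain ⟨u, v, a, b, hab, rfl, rfl⟩ := h
  refine ⟨Equiv.swap (u.length + 1) (u.length + 2), by simp, fun j => ?_,
    TwoMoveStep.nodeData_swap u v hab, fun j j' _ _ hlt hl => ?_⟩
  · simp only [ValidNode, List.length_append, List.length_cons, Equiv.swap_apply_def]
    split_ifs <;> omega
  · by_cases hc : j = u.length + 1 ∧ j' = u.length + 2
    · obtain ⟨rfl, rfl⟩ := hc
      exact absurd hl (not_linked_of_twoMove u v hab.symm)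
    · simp only [Equiv.swap_apply_def]
      split_ifs <;> omega

lemma TwoMoveEquiv.exists_diagramIso {w w' : List ℕ} (h : TwoMoveEquiv w w') :
    ∃ f, DiagramIso w w' f := by
  induction h with
  | refl => exact ⟨1, DiagramIso.refl w⟩
  | tail _ hs ih =>
    obtain ⟨f, hf⟩ := ih
    obtain ⟨g, hg⟩ := hs.exists_diagramIso
    exact ⟨f * g, hf.trans hg⟩

/-! ### Letters of a word reversing an interval -/

/-- The permutation `π` reverses the interval `{a, …, a + m}` and fixes everything else. -/
def ReversesInterval (π : Equiv.Perm ℕ) (a m : ℕ) : Prop :=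
  ∀ c, π c = if a ≤ c ∧ c ≤ a + m then 2 * a + m - c else c

lemma longestPerm_apply (n c : ℕ) :
    longestPerm n c = if 1 ≤ c ∧ c ≤ n + 1 then n + 2 - c else c := rfl

lemma eq_longestPerm_iff {π : Equiv.Perm ℕ} {n : ℕ} :
    π = longestPerm n ↔ ReversesInterval π 1 n := by
  rw [Equiv.ext_iff]
  refine forall_congr' fun c => ?_
  rw [longestPerm_apply, show 1 + n = n + 1 by omega, show 2 * 1 + n - c = n + 2 - c by omega]

lemma ReversesInterval.symm_eq {π : Equiv.Perm ℕ} {a m : ℕ} (h : ReversesInterval π a m) :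
    π.symm = π := by
  ext c
  rw [Equiv.symm_apply_eq, h, h]
  split_ifs <;> omega

lemma stateAbove_symm_lt_of_not_cross {w : List ℕ} {a b : ℕ} (hab : a < b)
    (hw : ∀ i, ValidNode w i → ¬ (wireX w i = a ∧ wireY w i = b)) {j : ℕ} (hj : 1 ≤ j)
    (hjw : j ≤ w.length + 1) : (stateAbove w j).symm a < (stateAbove w j).symm b := by
  induction j, hj using Nat.le_induction with
  | base => rwa [stateAbove_one]
  | succ j hj ih =>
    specialize ih (by omega)
    have hvalid : ValidNode w j := ⟨hj, by omega⟩
    have hcross : ¬ ((stateAbove w j).symm a = letterAt w j ∧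
        (stateAbove w j).symm b = letterAt w j + 1) := fun h =>
      hw j hvalid ⟨by rw [wireX, ← h.1, Equiv.apply_symm_apply],
        by rw [wireY, ← h.2, Equiv.apply_symm_apply]⟩
    have hsymm : ∀ c, (stateAbove w (j + 1)).symm c =
        sTrans (letterAt w j) ((stateAbove w j).symm c) := fun c => by
      rw [stateAbove_succ hvalid, Equiv.symm_apply_eq, Equiv.Perm.mul_apply, sTrans,
        Equiv.swap_apply_self, Equiv.apply_symm_apply]
    rw [hsymm, hsymm, sTrans_apply, sTrans_apply]
    split_ifs <;> omega

lemma ReversesInterval.exists_cross {w : List ℕ} {a m : ℕ}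
    (h : ReversesInterval (wordProd w) a m) {b c : ℕ} (hab : a ≤ b) (hbc : b < c)
    (hcm : c ≤ a + m) : ∃ j, ValidNode w j ∧ wireX w j = b ∧ wireY w j = c := by
  by_contra! hno
  have hlt := stateAbove_symm_lt_of_not_cross hbc (fun i hi hi' => hno i hi hi'.1 hi'.2)
    (Nat.le_add_left 1 w.length) le_rfl
  rw [stateAbove_length_succ, h.symm_eq, h, h, if_pos (by omega), if_pos (by omega)] at hlt
  omega

/-- There are as many nodes as pairs of wires that have to cross. -/
lemma ReversesInterval.wires_mem {w : List ℕ} {a m : ℕ}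
    (h : ReversesInterval (wordProd w) a m) (hlen : w.length = Dim m) {j : ℕ}
    (hj : ValidNode w j) :
    (a ≤ wireX w j ∧ wireX w j ≤ a + m) ∧ (a ≤ wireY w j ∧ wireY w j ≤ a + m) := by
  set pairs : Finset (Σ _ : ℕ, ℕ) := (Finset.range (m + 1)).sigma Finset.range with hpairs
  set nodes := Finset.Icc 1 w.length
  have hcard : pairs.card = nodes.card := by
    simp only [hpairs, nodes, Finset.card_sigma, Finset.card_range, Finset.sum_range_id,
      Nat.card_Icc, hlen, Dim, Nat.add_sub_cancel, mul_comm]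
  have hnode : ∀ y < m + 1, ∀ x < y, ∃ i ∈ nodes, wireX w i = x + a ∧ wireY w i = y + a := by
    intro y hy x hx
    obtain ⟨i, hi, hxy⟩ := h.exists_cross (b := x + a) (c := y + a) (by omega) (by omega) (by omega)
    exact ⟨i, Finset.mem_Icc.2 hi, hxy⟩
  choose! node hmem hX hY using hnode
  have hsurj : ∀ i ∈ nodes, ∃ q, ∃ _ : q ∈ pairs, i = node q.1 q.2 := by
    refine Finset.surj_on_of_inj_on_of_card_le (fun q _ => node q.1 q.2) ?_ ?_ hcard.ge
    · simp only [hpairs, Finset.mem_sigma, Finset.mem_range]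
      exact fun q hq => hmem _ hq.1 _ hq.2
    · simp only [hpairs, Finset.mem_sigma, Finset.mem_range]
      rintro ⟨y, x⟩ ⟨y', x'⟩ ⟨hy, hx⟩ ⟨hy', hx'⟩ heq
      have h₁ := hX y hy x hx
      have h₂ := hY y hy x hx
      simp only at heq
      rw [heq, hX y' hy' x' hx'] at h₁
      rw [heq, hY y' hy' x' hx'] at h₂
      obtain rfl : y = y' := by omega
      obtain rfl : x = x' := by omega
      rfl
  obtain ⟨⟨y, x⟩, hq, rfl⟩ := hsurj j (Finset.mem_Icc.2 hj)
  simp only [hpairs, Finset.mem_sigma, Finset.mem_range] at hq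
  have := hX y hq.1 x hq.2
  have := hY y hq.1 x hq.2
  simp only
  omega

lemma ReversesInterval.mem_word {w : List ℕ} {a m : ℕ}
    (h : ReversesInterval (wordProd w) a m) (hlen : w.length = Dim m) {x : ℕ} (hx : x ∈ w) :
    a ≤ x ∧ x < a + m := by
  obtain ⟨j, hj, rfl⟩ := exists_letterAt_eq hx
  have letter_mem : ∀ i, ValidNode w i →
      (∀ c, ¬ (a ≤ c ∧ c ≤ a + m) → stateAbove w i c = c) →
      a ≤ letterAt w i ∧ letterAt w i < a + m := by
    intro i hi hfix
    obtain ⟨hX, hY⟩ := h.wires_mem hlen hi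
    have hl : a ≤ letterAt w i ∧ letterAt w i ≤ a + m := by
      by_contra hc
      exact hc (by rwa [wireX, hfix _ hc] at hX)
    have hl' : a ≤ letterAt w i + 1 ∧ letterAt w i + 1 ≤ a + m := by
      by_contra hc
      exact hc (by rwa [wireY, hfix _ hc] at hY)
    exact ⟨hl.1, hl'.2⟩
  refine letter_mem j hj ?_
  obtain ⟨hj1, hjw⟩ := hj
  induction j, hj1 using Nat.le_induction with
  | base => simp [stateAbove_one]
  | succ j hj1 ih =>
    have hvalid : ValidNode w j := ⟨hj1, by omega⟩
    have hfix := ih (letterAt_mem hvalid) hvalid.2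
    have hl := letter_mem j hvalid hfix
    intro c hc
    rw [stateAbove_succ hvalid, Equiv.Perm.mul_apply, sTrans_apply, if_neg (by omega),
      if_neg (by omega), hfix c hc]

/-! ### Uniqueness of the suffix after a monotone run -/

/-- The projection of a word to the letters `x` and `y`; for near letters it is invariant under
2-moves. -/
def projPair (x y : ℕ) (w : List ℕ) : List ℕ := w.filter (fun a => decide (a = x ∨ a = y))

lemma projPair_append (x y : ℕ) (u v : List ℕ) :
    projPair x y (u ++ v) = projPair x y u ++ projPair x y v := List.filter_append ..

lemma TwoMoveEquiv.projPair_eq {w w' : List ℕ} (h : TwoMoveEquiv w w') {x y : ℕ}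
    (hxy : Near x y) : projPair x y w = projPair x y w' := by
  induction h with
  | refl => rfl
  | tail _ hs ih =>
    obtain ⟨u, v, a, b, hab, rfl, rfl⟩ := hs
    have hnot : ¬ ((a = x ∨ a = y) ∧ (b = x ∨ b = y)) := by
      unfold Near at hxy
      omega
    rw [ih]
    by_cases ha : a = x ∨ a = y <;> by_cases hb : b = x ∨ b = y
    · exact absurd ⟨ha, hb⟩ hnot
    all_goals simp only [projPair, List.filter_append, List.filter_cons, ha, hb, decide_true,
      decide_false, if_true, if_false, Bool.false_eq_true]

lemma projPair_of_nodup {z₁ z₂ : List ℕ} {x y : ℕ} (hnd : (z₁ ++ x :: y :: z₂).Nodup) :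
    projPair x y (z₁ ++ x :: y :: z₂) = [x, y] := by
  simp only [List.nodup_append', List.nodup_cons, List.mem_cons, List.disjoint_cons_right,
    not_or] at hnd
  have hnil : ∀ z : List ℕ, x ∉ z → y ∉ z → projPair x y z = [] := by
    intro z hxz hyz
    simp only [projPair, List.filter_eq_nil_iff, decide_eq_true_eq, not_or]
    exact fun a ha => ⟨fun e => hxz (e ▸ ha), fun e => hyz (e ▸ ha)⟩
  rw [projPair_append, hnil z₁ (by tauto) (by tauto), projPair,
    List.filter_cons_of_pos (by simp), List.filter_cons_of_pos (by simp), ← projPair,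
    hnil z₂ (by tauto) (by tauto), List.nil_append]

lemma exists_projPair_eq_replicate {v : List ℕ} {x y : ℕ} (hx : x ∉ v) (hy : y ∈ v) :
    ∃ c, projPair x y v = List.replicate (c + 1) y := by
  have hmem : ∀ a ∈ projPair x y v, a = y := by
    simp only [projPair, List.mem_filter, decide_eq_true_eq]
    rintro a ⟨hav, rfl | rfl⟩
    · exact absurd hav hx
    · rfl
  have hyv : y ∈ projPair x y v := by simpa [projPair] using hy
  obtain ⟨c, hc⟩ := Nat.exists_eq_succ_of_ne_zero (List.length_pos_of_mem hyv).ne'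
  exact ⟨c, List.eq_replicate_iff.2 ⟨hc, hmem⟩⟩

/-- Projected to the letters `x` and `y`, the word on the left ends in `x y`; if `v` contained `y`,
the one on the right would end in `y y`. -/
lemma TwoMoveEquiv.not_mem_of_near {u u' v z₁ z₂ : List ℕ} {x y : ℕ}
    (h : TwoMoveEquiv (u ++ (z₁ ++ x :: y :: z₂)) (u' ++ (z₁ ++ x :: y :: z₂) ++ v))
    (hnd : (z₁ ++ x :: y :: z₂).Nodup) (hxy : Near x y) (hx : x ∉ v) : y ∉ v := by
  intro hy
  obtain ⟨c, hc⟩ := exists_projPair_eq_replicate hx hy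
  have hyy : [x, y] ++ List.replicate (c + 1) y = ([x] ++ List.replicate c y) ++ [y, y] := by
    rw [List.append_assoc, show [y, y] = List.replicate 2 y from rfl,
      List.replicate_append_replicate]
    rfl
  have hproj := h.projPair_eq hxy
  rw [projPair_append x y u, projPair_append x y _ v, projPair_append x y u',
    projPair_of_nodup hnd, hc, List.append_assoc, hyy, ← List.append_assoc] at hproj
  have hlast := List.append_inj_right' hproj rfl
  simp only [List.cons.injEq, and_true] at hlast
  have hne := (List.nodup_cons.1 hnd.of_append_right).1
  rw [hlast] at hne
  exact hne List.mem_cons_self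

lemma TwoMoveEquiv.forall_not_mem {u u' v z₁ z₂ : List ℕ} {x : ℕ}
    (h : TwoMoveEquiv (u ++ (z₁ ++ x :: z₂)) (u' ++ (z₁ ++ x :: z₂) ++ v))
    (hnd : (z₁ ++ x :: z₂).Nodup) (hchain : (x :: z₂).IsChain Near) (hx : x ∉ v) :
    ∀ y ∈ z₂, y ∉ v := by
  induction z₂ generalizing z₁ x with
  | nil => simp
  | cons y z₂ ih =>
    rw [List.isChain_cons_cons] at hchain
    have hy : y ∉ v := h.not_mem_of_near hnd hchain.1 hx
    rw [List.forall_mem_cons]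
    refine ⟨hy, ih (z₁ := z₁ ++ [x]) ?_ ?_ hchain.2 hy⟩
    · simpa using h
    · simpa using hnd

lemma TwoMoveEquiv.suffix_eq_nil {u u' v z : List ℕ} {x : ℕ}
    (h : TwoMoveEquiv (u ++ x :: z) (u' ++ x :: z ++ v)) (hnd : (x :: z).Nodup)
    (hchain : (x :: z).IsChain Near) (hx : x ∉ u) (hv : ∀ y ∈ v, y ∈ x :: z) : v = [] := by
  have hxv : x ∉ v := by
    have hcount := h.perm.count_eq x
    simp only [List.count_append, List.count_eq_zero_of_not_mem hx] at hcount
    exact List.count_eq_zero.1 (by omega)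
  refine List.eq_nil_iff_forall_not_mem.2 fun y hy => ?_
  rcases List.mem_cons.1 (hv y hy) with rfl | hyz
  · exact hxv hy
  · exact TwoMoveEquiv.forall_not_mem (z₁ := []) h hnd hchain hxv y hyz hy

lemma nodup_ascWord (m : ℕ) : (ascWord m).Nodup :=
  List.nodup_range.map (add_left_injective 1)

lemma isChain_near_ascWord (m : ℕ) : (ascWord m).IsChain Near := by
  rw [ascWord, List.isChain_map, List.isChain_range]
  intro i _
  unfold Near
  omega

lemma isChain_near_descWord (m : ℕ) : (descWord m).IsChain Near := by
  rw [descWord, List.isChain_reverse]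
  exact (isChain_near_ascWord m).imp fun a b h => ⟨h.2, h.1⟩

/-! ### Reduction to the canonical word -/

lemma IsReduced.congr {n : ℕ} {w w' : List ℕ} (h : IsReduced n w) (hw : TwoMoveEquiv w w') :
    IsReduced n w' :=
  ⟨hw.perm.length_eq ▸ h.1, fun a ha => h.2.1 a (hw.perm.mem_iff.2 ha), hw.wordProd_eq ▸ h.2.2⟩

lemma Dim_succ (n : ℕ) : Dim (n + 1) = Dim n + (n + 1) := by
  have h := Nat.triangle_succ (n + 1)
  rwa [Nat.add_sub_cancel, Nat.add_sub_cancel, mul_comm, mul_comm (n + 1) n] at h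

lemma ReversesInterval.of_append_descWord {n : ℕ} {u : List ℕ}
    (h : ReversesInterval (wordProd (u ++ descWord (n + 1))) 1 (n + 1)) :
    ReversesInterval (wordProd u) 1 n := by
  intro c
  obtain ⟨d, hd⟩ := (wordProd (descWord (n + 1))).surjective c
  have hc := h d
  rw [wordProd_append, Equiv.Perm.mul_apply, hd] at hc
  rw [wordProd_descWord] at hd
  rw [hc]
  split_ifs at hd ⊢ <;> omega

lemma ReversesInterval.of_append_ascWord {n : ℕ} {u : List ℕ}
    (h : ReversesInterval (wordProd (u ++ ascWord (n + 1))) 1 (n + 1)) :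
    ReversesInterval (wordProd u) 2 n := by
  intro c
  obtain ⟨d, hd⟩ := (wordProd (ascWord (n + 1))).surjective c
  have hc := h d
  rw [wordProd_append, Equiv.Perm.mul_apply, hd] at hc
  rw [wordProd_ascWord] at hd
  rw [hc]
  split_ifs at hd ⊢ <;> omega

lemma IsReduced.of_append_descWord {n : ℕ} {u : List ℕ}
    (h : IsReduced (n + 1) (u ++ descWord (n + 1))) : IsReduced n u := by
  obtain ⟨hlen, -, hprod⟩ := h
  rw [List.length_append, length_descWord, ← Dim, Dim_succ] at hlen
  have hrev := (eq_longestPerm_iff.1 hprod).of_append_descWord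
  have hlen' : u.length = Dim n := by omega
  exact ⟨hlen', fun a ha => by have := hrev.mem_word hlen' ha; omega, eq_longestPerm_iff.2 hrev⟩

lemma IsReduced.of_append_ascWord {n : ℕ} {u : List ℕ}
    (h : IsReduced (n + 1) (u ++ ascWord (n + 1))) :
    ∃ u' : List ℕ, u = u'.map (· + 1) ∧ IsReduced n u' := by
  obtain ⟨hlen, -, hprod⟩ := h
  rw [List.length_append, length_ascWord, ← Dim, Dim_succ] at hlen
  have hrev := (eq_longestPerm_iff.1 hprod).of_append_ascWord
  have hlen' : u.length = Dim n := by omega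
  have hmem : ∀ a ∈ u, 2 ≤ a ∧ a < 2 + n := fun a ha => hrev.mem_word hlen' ha
  obtain ⟨u', rfl⟩ : ∃ u' : List ℕ, u = u'.map (· + 1) := by
    refine ⟨u.map (· - 1), ?_⟩
    rw [List.map_map]
    conv_lhs => rw [← List.map_id u]
    exact List.map_congr_left fun a ha => (Nat.sub_add_cancel (Nat.le_of_lt (hmem a ha).1)).symm
  refine ⟨u', rfl, by simpa using hlen', fun a ha => ?_, eq_longestPerm_iff.2 fun c => ?_⟩
  · have := hmem (a + 1) (List.mem_map_of_mem ha)
    omega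
  · have hc := hrev (c + 1)
    rw [wordProd_map_succ_succ] at hc
    split_ifs at hc ⊢ <;> omega

lemma exists_equiv_append_descWord {n : ℕ} {w w' : List ℕ} (hc : IsContractionD n w w')
    (hind : indD n w = 0) : ∃ u, TwoMoveEquiv w (u ++ descWord n) := by
  obtain ⟨u, v, hv, h⟩ := (Nat.sInf_eq_zero.1 hind).resolve_right
    (Set.Nonempty.ne_empty (by obtain ⟨u, v, h, -⟩ := hc; exact ⟨_, u, v, rfl, h⟩))
  rw [List.length_eq_zero_iff.1 hv, List.append_nil] at h
  exact ⟨u, h⟩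

lemma exists_equiv_append_ascWord {n : ℕ} {w w' : List ℕ} (hc : IsContractionA n w w')
    (hind : indA n w = 0) : ∃ u, TwoMoveEquiv w (u ++ ascWord n) := by
  obtain ⟨u, v, hv, h⟩ := (Nat.sInf_eq_zero.1 hind).resolve_right
    (Set.Nonempty.ne_empty (by obtain ⟨u, v, h, -⟩ := hc; exact ⟨_, u, v, rfl, h⟩))
  rw [List.length_eq_zero_iff.1 hv, List.append_nil] at h
  exact ⟨u, h⟩

lemma IsContractionD.of_indD_eq_zero {n : ℕ} {w w' : List ℕ} (hw : IsReduced (n + 1) w)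
    (hc : IsContractionD (n + 1) w w') (hind : indD (n + 1) w = 0) :
    TwoMoveEquiv w (w' ++ descWord (n + 1)) ∧ IsReduced n w' := by
  obtain ⟨u, hu⟩ := exists_equiv_append_descWord hc hind
  obtain ⟨u', v, h, rfl⟩ := hc
  have hred := (hw.congr hu).of_append_descWord
  have hdesc : descWord (n + 1) = (n + 1) :: descWord n := by
    simp [descWord, ascWord, List.range_succ]
  obtain rfl : v = [] := by
    have huv : TwoMoveEquiv (u ++ descWord (n + 1)) (u' ++ descWord (n + 1) ++ v) :=
      hu.symm.trans h
    have hv : ∀ y ∈ v, y ∈ descWord (n + 1) := fun y hy =>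
      mem_descWord.2 ((hw.congr h).2.1 y (List.mem_append_right _ hy))
    have hchain := isChain_near_descWord (n + 1)
    have hnd := List.nodup_reverse.2 (nodup_ascWord (n + 1))
    rw [← descWord] at hnd
    rw [hdesc] at huv hv hchain hnd
    exact huv.suffix_eq_nil hnd hchain (fun hn => by have := hred.2.1 _ hn; omega) hv
  rw [List.append_nil] at h
  rw [List.map_nil, List.append_nil]
  exact ⟨h, (hw.congr h).of_append_descWord⟩

lemma IsContractionA.of_indA_eq_zero {n : ℕ} {w w' : List ℕ} (hw : IsReduced (n + 1) w)
    (hc : IsContractionA (n + 1) w w') (hind : indA (n + 1) w = 0) :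
    TwoMoveEquiv w (w'.map (· + 1) ++ ascWord (n + 1)) ∧ IsReduced n w' := by
  obtain ⟨u, hu⟩ := exists_equiv_append_ascWord hc hind
  obtain ⟨u', v, h, rfl⟩ := hc
  obtain ⟨u₀, rfl, hred⟩ := (hw.congr hu).of_append_ascWord
  have hasc : ascWord (n + 1) = 1 :: (ascWord n).map (· + 1) := by
    simp [ascWord, List.range_succ_eq_map]
  obtain rfl : v = [] := by
    have huv : TwoMoveEquiv (u₀.map (· + 1) ++ ascWord (n + 1)) (u' ++ ascWord (n + 1) ++ v) :=
      hu.symm.trans h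
    have hv : ∀ y ∈ v, y ∈ ascWord (n + 1) := fun y hy =>
      mem_ascWord.2 ((hw.congr h).2.1 y (List.mem_append_right _ hy))
    have hchain := isChain_near_ascWord (n + 1)
    have hnd := nodup_ascWord (n + 1)
    rw [hasc] at huv hv hchain hnd
    refine huv.suffix_eq_nil hnd hchain (fun hn => ?_) hv
    obtain ⟨a, ha, ha'⟩ := List.mem_map.1 hn
    have := hred.2.1 a ha
    omega
  rw [List.append_nil] at h
  obtain ⟨w', rfl, hred'⟩ := (hw.congr h).of_append_ascWord
  have hw' : (w'.map (· + 1)).map (· - 1) = w' := by simp [Function.comp_def]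
  rw [List.append_nil, hw']
  exact ⟨h, hred'⟩

/-- The representative of the 2-move class determined by the sequence `σ` (`true` for `D`, `false`
for `A`): its `κ`-th block is `D_κ` or `A_κ`, shifted by the number of later `A`s. -/
def canonicalWord (σ : ℕ → Bool) : ℕ → List ℕ
  | 0 => []
  | k + 1 => if σ (k + 1) then canonicalWord σ k ++ descWord (k + 1)
      else (canonicalWord σ k).map (· + 1) ++ ascWord (k + 1)

lemma twoMoveEquiv_canonicalWord (σ : ℕ → Bool) (c : ℕ → List ℕ) (n : ℕ)
    (hred : IsReduced n (c n)) (h : ∀ k, 1 ≤ k → k ≤ n →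
      (if σ k then IsContractionD k (c k) (c (k - 1)) ∧ indD k (c k) = 0
       else IsContractionA k (c k) (c (k - 1)) ∧ indA k (c k) = 0)) :
    TwoMoveEquiv (c n) (canonicalWord σ n) := by
  induction n with
  | zero =>
    rw [List.length_eq_zero_iff.1 hred.1]
    exact Relation.ReflTransGen.refl
  | succ n ih =>
    have hlast := h (n + 1) (by omega) le_rfl
    rw [Nat.add_sub_cancel] at hlast
    rw [canonicalWord]
    split_ifs at hlast ⊢
    · obtain ⟨hequiv, hred'⟩ := hlast.1.of_indD_eq_zero hred hlast.2
      exact hequiv.trans ((ih hred' fun k h1 hk => h k h1 (by omega)).append_right _)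
    · obtain ⟨hequiv, hred'⟩ := hlast.1.of_indA_eq_zero hred hlast.2
      exact hequiv.trans ((ih hred' fun k h1 hk => h k h1 (by omega)).map_succ.append_right _)

lemma SimplicialWord.exists_diagramIso {n : ℕ} {w : List ℕ} (hred : IsReduced n w)
    (h : SimplicialWord n w) :
    ∃ (σ : ℕ → Bool) (f : Equiv.Perm ℕ), DiagramIso w (canonicalWord σ n) f := by
  obtain ⟨σ, c, rfl, hc⟩ := h
  exact ⟨σ, (twoMoveEquiv_canonicalWord σ c n hred hc).exists_diagramIso⟩

/-! ### Blocks of the canonical word -/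

/-- The pair `(κ, p)` indexes the `p`-th node of the `κ`-th block of a canonical word. -/
structure BlockIndex (n κ p : ℕ) : Prop where
  one_le : 1 ≤ p
  le_block : p ≤ κ
  block_le : κ ≤ n

/-- The number of letters of a canonical word before its `κ`-th block. -/
def blockStart (κ : ℕ) : ℕ := κ * (κ - 1) / 2

lemma blockStart_succ (κ : ℕ) : blockStart (κ + 1) = blockStart κ + κ := Nat.triangle_succ κ

lemma blockStart_succ_eq_Dim (n : ℕ) : blockStart (n + 1) = Dim n := by
  rw [blockStart, Dim, Nat.add_sub_cancel, mul_comm]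

lemma blockStart_mono : Monotone blockStart :=
  monotone_nat_of_le_succ fun κ => by rw [blockStart_succ]; omega

lemma blockStart_add_le {κ κ' p : ℕ} (h : κ < κ') (hp : p ≤ κ) :
    blockStart κ + p ≤ blockStart κ' :=
  calc blockStart κ + p ≤ blockStart (κ + 1) := by rw [blockStart_succ]; omega
    _ ≤ blockStart κ' := blockStart_mono h

lemma BlockIndex.blockStart_add_le_Dim {n κ p : ℕ} (h : BlockIndex n κ p) :
    blockStart κ + p ≤ Dim n := by
  rw [← blockStart_succ_eq_Dim]
  exact blockStart_add_le (Nat.lt_succ_of_le h.block_le) h.le_block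

lemma BlockIndex.blockStart_add_lt_iff {n κ p κ' p' : ℕ} (h : BlockIndex n κ p)
    (h' : BlockIndex n κ' p') :
    blockStart κ + p < blockStart κ' + p' ↔ κ < κ' ∨ κ = κ' ∧ p < p' := by
  have := h.one_le
  have := h'.one_le
  rcases lt_trichotomy κ κ' with hlt | rfl | hlt
  · have := blockStart_add_le hlt h.le_block
    omega
  · omega
  · have := blockStart_add_le hlt h'.le_block
    omega

lemma exists_blockStart_add {n j : ℕ} (hj : 1 ≤ j) (hjn : j ≤ Dim n) :
    ∃ κ p, BlockIndex n κ p ∧ blockStart κ + p = j := by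
  rw [← blockStart_succ_eq_Dim] at hjn
  induction n with
  | zero =>
    rw [show blockStart (0 + 1) = 0 from rfl] at hjn
    omega
  | succ n ih =>
    by_cases h : j ≤ blockStart (n + 1)
    · obtain ⟨κ, p, hκp, rfl⟩ := ih h
      exact ⟨κ, p, ⟨hκp.1, hκp.2, hκp.3.trans n.le_succ⟩, rfl⟩
    · rw [blockStart_succ] at hjn
      exact ⟨n + 1, j - blockStart (n + 1), ⟨by omega, by omega, le_rfl⟩, by omega⟩

/-- The number of ascending blocks after the `κ`-th one; the letters of the `κ`-th block are
shifted by it. -/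
def offset (σ : ℕ → Bool) (n κ : ℕ) : ℕ := ∑ i ∈ Finset.Ioc κ n, if σ i then 0 else 1

lemma offset_self (σ : ℕ → Bool) (n : ℕ) : offset σ n n = 0 := by simp [offset]

lemma offset_succ_top (σ : ℕ → Bool) {n κ : ℕ} (h : κ ≤ n) :
    offset σ (n + 1) κ = offset σ n κ + if σ (n + 1) then 0 else 1 :=
  Finset.sum_Ioc_succ_top h _

lemma offset_pred (σ : ℕ → Bool) {n κ : ℕ} (h : κ < n) :
    offset σ n κ = offset σ n (κ + 1) + if σ (κ + 1) then 0 else 1 := by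
  rw [offset, ← Finset.sum_Ioc_consecutive _ κ.le_succ h, Nat.Ioc_succ_singleton,
    Finset.sum_singleton, add_comm, offset]

/-- The wires of the `κ`-th block: its `p`-th node, `p ≤ κ`, is the crossing of the wires number `p`
and `κ + 1`. -/
def blockWire (σ : ℕ → Bool) (n κ p : ℕ) : ℕ :=
  if σ κ then offset σ n κ + p else offset σ n κ + κ + 2 - p

/-- The column of the `p`-th node of the `κ`-th block, relative to the first column of the
block. -/
def blockCol (σ : ℕ → Bool) (κ p : ℕ) : ℕ := if σ κ then κ + 1 - p else p

lemma length_canonicalWord (σ : ℕ → Bool) (n : ℕ) :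
    (canonicalWord σ n).length = blockStart (n + 1) := by
  induction n with
  | zero => rfl
  | succ n ih =>
    rw [canonicalWord, blockStart_succ (n + 1)]
    split_ifs <;> simp [ih, length_descWord, length_ascWord]

lemma BlockIndex.validNode {n κ p : ℕ} (h : BlockIndex n κ p) (σ : ℕ → Bool) :
    ValidNode (canonicalWord σ n) (blockStart κ + p) := by
  rw [ValidNode, length_canonicalWord, blockStart_succ_eq_Dim]
  have := h.blockStart_add_le_Dim
  have := h.one_le
  omega

lemma ReversesInterval.map_succ {u : List ℕ} {a m : ℕ} (h : ReversesInterval (wordProd u) a m) :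
    ReversesInterval (wordProd (u.map (· + 1))) (a + 1) m := by
  rintro (_ | c)
  · rw [wordProd_map_succ_zero, if_neg (by omega)]
  · rw [wordProd_map_succ_succ, h]
    split_ifs <;> omega

lemma wordProd_canonicalWord (σ : ℕ → Bool) (n : ℕ) :
    ReversesInterval (wordProd (canonicalWord σ n)) 1 n := by
  induction n with
  | zero =>
    intro c
    rw [canonicalWord, wordProd, List.map_nil, List.prod_nil, Equiv.Perm.one_apply]
    split_ifs <;> omega
  | succ n ih =>
    intro c
    rw [canonicalWord]
    by_cases hσ : σ (n + 1)
    · rw [if_pos hσ, wordProd_append, Equiv.Perm.mul_apply, ih, wordProd_descWord]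
      split_ifs <;> omega
    · rw [if_neg hσ, wordProd_append, Equiv.Perm.mul_apply, ih.map_succ, wordProd_ascWord]
      split_ifs <;> omega

lemma nodeData_canonicalWord_last (σ : ℕ → Bool) {n p : ℕ} (hp : 1 ≤ p) (hpn : p ≤ n + 1) :
    nodeData (canonicalWord σ (n + 1)) (blockStart (n + 1) + p) = (blockCol σ (n + 1) p,
      if σ (n + 1) then (p, n + 2) else (1, n + 3 - p)) := by
  have hrev := wordProd_canonicalWord σ n
  have hlen := length_canonicalWord σ n
  by_cases hσ : σ (n + 1)
  · have h := nodeData_append_right (canonicalWord σ n) (descWord (n + 1)) hp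
    have hdata := nodeData_descWord hp hpn
    simp only [nodeData, Prod.mk.injEq] at hdata
    rw [hdata.1, hdata.2.1, hdata.2.2, hrev, hrev, hlen] at h
    simp only [canonicalWord, blockCol, hσ, if_true, h, Prod.mk.injEq, true_and]
    split_ifs <;> omega
  · have h := nodeData_append_right ((canonicalWord σ n).map (· + 1)) (ascWord (n + 1)) hp
    have hdata := nodeData_ascWord hp hpn
    simp only [nodeData, Prod.mk.injEq] at hdata
    rw [hdata.1, hdata.2.1, hdata.2.2, hrev.map_succ, hrev.map_succ, List.length_map, hlen] at h
    simp only [canonicalWord, blockCol, hσ, if_false, h, Bool.false_eq_true, Prod.mk.injEq,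
      true_and]
    split_ifs <;> omega

lemma nodeData_canonicalWord (σ : ℕ → Bool) {n κ p : ℕ} (h : BlockIndex n κ p) :
    nodeData (canonicalWord σ n) (blockStart κ + p) = (offset σ n κ + blockCol σ κ p,
      if σ κ then (blockWire σ n κ p, blockWire σ n κ (κ + 1))
      else (blockWire σ n κ (κ + 1), blockWire σ n κ p)) := by
  obtain ⟨hp, hpκ, hκn⟩ := h
  induction n, hκn using Nat.le_induction with
  | base =>
    obtain ⟨m, rfl⟩ : ∃ m, κ = m + 1 := ⟨κ - 1, by omega⟩
    rw [nodeData_canonicalWord_last σ hp hpκ]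
    simp only [blockWire, offset_self, Prod.mk.injEq]
    split_ifs <;> simp only [Prod.mk.injEq] <;> omega
  | succ n hκn ih =>
    have hvalid := BlockIndex.validNode ⟨hp, hpκ, hκn⟩ σ
    rw [canonicalWord]
    by_cases hσ : σ (n + 1)
    · rw [if_pos hσ, nodeData_append_left hvalid, ih]
      simp only [blockWire, offset_succ_top σ hκn, hσ, if_true, add_zero]
    · have hvalid' : ValidNode ((canonicalWord σ n).map (· + 1)) (blockStart κ + p) := by
        rwa [ValidNode, List.length_map]
      rw [if_neg hσ, nodeData_append_left hvalid', nodeData_map_succ hvalid]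
      simp only [nodeData, Prod.mk.injEq] at ih
      simp only [ih.1, blockWire, offset_succ_top σ hκn, hσ, Bool.false_eq_true, if_false] at ih ⊢
      split_ifs at ih ⊢ <;> simp only [Prod.mk.injEq] at ih ⊢ <;> omega

/-! ### Diagrams isomorphic to the one of a canonical word -/

/-- A numbering of the block indices by `1, …, n(n+1)/2`. -/
structure BlockNumbering (n : ℕ) (nd : ℕ → ℕ → ℕ) : Prop where
  one_le : ∀ {κ p}, BlockIndex n κ p → 1 ≤ nd κ p
  le_Dim : ∀ {κ p}, BlockIndex n κ p → nd κ p ≤ Dim n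
  exists_eq : ∀ {j}, 1 ≤ j → j ≤ Dim n → ∃ κ p, BlockIndex n κ p ∧ nd κ p = j
  injective : ∀ {κ p κ' p'}, BlockIndex n κ p → BlockIndex n κ' p' → nd κ p = nd κ' p' →
    κ = κ' ∧ p = p'

/-- The word `w` has the wiring diagram of the canonical word of `σ`, up to the order of unlinked
nodes, with `nd κ p` the index of the `p`-th node of the `κ`-th block. -/
structure BlockDiagram (σ : ℕ → Bool) (n : ℕ) (w : List ℕ) (nd : ℕ → ℕ → ℕ) : Prop
    extends BlockNumbering n nd where
  length_eq : w.length = Dim n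
  letterAt_eq : ∀ {κ p}, BlockIndex n κ p → letterAt w (nd κ p) = offset σ n κ + blockCol σ κ p
  nodeOnWire_iff : ∀ {κ p r}, BlockIndex n κ p →
    (NodeOnWire w (nd κ p) r ↔ r = blockWire σ n κ p ∨ r = blockWire σ n κ (κ + 1))
  lt_iff : ∀ {κ p κ' p'}, BlockIndex n κ p → BlockIndex n κ' p' → Linked w (nd κ p) (nd κ' p') →
    (nd κ p < nd κ' p' ↔ κ < κ' ∨ κ = κ' ∧ p < p')

lemma blockNumbering_blockStart (n : ℕ) : BlockNumbering n (fun κ p => blockStart κ + p) where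
  one_le h := h.one_le.trans (Nat.le_add_left _ _)
  le_Dim h := h.blockStart_add_le_Dim
  exists_eq := exists_blockStart_add
  injective h h' heq := by
    have := h.blockStart_add_lt_iff h'
    have := h'.blockStart_add_lt_iff h
    omega

lemma DiagramIso.blockNumbering {σ : ℕ → Bool} {n : ℕ} {w : List ℕ} {f : Equiv.Perm ℕ}
    (h : DiagramIso w (canonicalWord σ n) f) :
    BlockNumbering n (fun κ p => f (blockStart κ + p)) where
  one_le hκp := ((h.validNode_iff _).2 (hκp.validNode σ)).1
  le_Dim hκp := by
    rw [← blockStart_succ_eq_Dim, ← length_canonicalWord σ n, ← h.length_eq]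
    exact ((h.validNode_iff _).2 (hκp.validNode σ)).2
  exists_eq {j} hj hjn := by
    have hvalid : ValidNode (canonicalWord σ n) (f.symm j) := by
      rw [← h.validNode_iff, Equiv.apply_symm_apply, ValidNode, h.length_eq,
        length_canonicalWord, blockStart_succ_eq_Dim]
      exact ⟨hj, hjn⟩
    rw [ValidNode, length_canonicalWord, blockStart_succ_eq_Dim] at hvalid
    obtain ⟨κ, p, hκp, hfj⟩ := exists_blockStart_add hvalid.1 hvalid.2
    exact ⟨κ, p, hκp, by rw [hfj, Equiv.apply_symm_apply]⟩
  injective h₁ h₂ heq := (blockNumbering_blockStart n).injective h₁ h₂ (f.injective heq)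

lemma DiagramIso.blockDiagram {σ : ℕ → Bool} {n : ℕ} {w : List ℕ} {f : Equiv.Perm ℕ}
    (h : DiagramIso w (canonicalWord σ n) f) :
    BlockDiagram σ n w (fun κ p => f (blockStart κ + p)) where
  toBlockNumbering := h.blockNumbering
  length_eq := by rw [h.length_eq, length_canonicalWord, blockStart_succ_eq_Dim]
  letterAt_eq hκp := congrArg Prod.fst
    ((h.nodeData_eq _ (hκp.validNode σ)).trans (nodeData_canonicalWord σ hκp))
  nodeOnWire_iff {κ p r} hκp := by
    have hdata := (h.nodeData_eq _ (hκp.validNode σ)).trans (nodeData_canonicalWord σ hκp)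
    simp only [nodeData, Prod.ext_iff] at hdata
    rw [NodeOnWire, hdata.2.1, hdata.2.2]
    split_ifs <;> simp only [eq_comm, or_comm]
  lt_iff h₁ h₂ hl := by
    have hv₁ := h₁.validNode σ
    have hv₂ := h₂.validNode σ
    rw [← h₁.blockStart_add_lt_iff h₂]
    rw [linked_congr (h.nodeData_eq _ hv₁) (h.nodeData_eq _ hv₂)] at hl
    refine ⟨fun hlt => ?_, fun hlt => h.lt_of_linked _ _ hv₁ hv₂ hlt hl⟩
    refine lt_of_le_of_ne (le_of_not_gt fun hgt => ?_) fun heq => ?_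
    · exact hlt.not_gt (h.lt_of_linked _ _ hv₂ hv₁ hgt hl.symm)
    · rw [heq] at hlt
      exact hlt.false

/-! ### Wires of a block diagram -/

section BlockWire

variable {σ : ℕ → Bool} {n κ κ' : ℕ}

lemma blockWire_of_desc (hσ : σ κ = true) (p : ℕ) : blockWire σ n κ p = offset σ n κ + p :=
  if_pos hσ

lemma blockWire_of_asc (hσ : σ κ = false) (p : ℕ) :
    blockWire σ n κ p = offset σ n κ + κ + 2 - p := by
  rw [blockWire, hσ, if_neg Bool.false_ne_true]

lemma lt_blockWire {p : ℕ} (hp : 1 ≤ p) (hpκ : p ≤ κ + 1) : offset σ n κ < blockWire σ n κ p := by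
  unfold blockWire
  split_ifs <;> omega

lemma blockWire_le {p : ℕ} (hp : 1 ≤ p) (hpκ : p ≤ κ + 1) :
    blockWire σ n κ p ≤ offset σ n κ + κ + 1 := by
  unfold blockWire
  split_ifs <;> omega

lemma blockWire_injective {p q : ℕ} (hp : p ≤ κ + 1) (hq : q ≤ κ + 1)
    (h : blockWire σ n κ p = blockWire σ n κ q) : p = q := by
  unfold blockWire at h
  split_ifs at h <;> omega

lemma offset_le (hκ : κ ≤ n) : offset σ n κ + κ ≤ n := by
  induction n, hκ using Nat.le_induction with
  | base => rw [offset_self, zero_add]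
  | succ n hκ ih =>
    rw [offset_succ_top σ hκ]
    split_ifs <;> omega

/-- The wires of a block all pass through each later block, on one side of its last wire. -/
lemma offset_nested (hκ : κ < κ') (hκ' : κ' ≤ n) :
    offset σ n κ' + (if σ κ' then 0 else 1) ≤ offset σ n κ ∧
      offset σ n κ + κ + (if σ κ' then 1 else 0) ≤ offset σ n κ' + κ' := by
  induction κ', hκ using Nat.le_induction with
  | base =>
    rw [offset_pred σ hκ', Nat.succ_eq_add_one]
    split_ifs <;> omega
  | succ κ' _ ih =>
    specialize ih (by omega)
    rw [offset_pred σ hκ'] at ih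
    split_ifs at ih ⊢ <;> omega

lemma offset_nested_desc (hκ : κ < κ') (hκ' : κ' ≤ n) (hσ : σ κ' = true) :
    offset σ n κ' ≤ offset σ n κ ∧
      offset σ n κ + κ + 1 < blockWire σ n κ' (κ' + 1) := by
  have h := offset_nested (σ := σ) hκ hκ'
  rw [if_pos hσ, if_pos hσ] at h
  rw [blockWire_of_desc hσ]
  omega

lemma offset_nested_asc (hκ : κ < κ') (hκ' : κ' ≤ n) (hσ : σ κ' = false) :
    blockWire σ n κ' (κ' + 1) ≤ offset σ n κ ∧
      offset σ n κ + κ ≤ offset σ n κ' + κ' := by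
  have h := offset_nested (σ := σ) hκ hκ'
  rw [hσ, if_neg Bool.false_ne_true, if_neg Bool.false_ne_true] at h
  rw [blockWire_of_asc hσ]
  omega

lemma offset_add_le (hκ : κ ≤ κ') (hκ' : κ' ≤ n) : offset σ n κ + κ ≤ offset σ n κ' + κ' := by
  rcases hκ.eq_or_lt with rfl | hκ
  · rfl
  · exact (Nat.le_add_right _ _).trans (offset_nested hκ hκ').2

/-- The wires `k` and `k + 1` both pass through the `κ`-th block. -/
def PassesThrough (σ : ℕ → Bool) (n κ k : ℕ) : Prop :=
  offset σ n κ < k ∧ k ≤ offset σ n κ + κ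

lemma PassesThrough.of_lt {k : ℕ} (h : PassesThrough σ n κ k) (hκ : κ < κ') (hκ' : κ' ≤ n) :
    PassesThrough σ n κ' k := by
  have hn := offset_nested (σ := σ) hκ hκ'
  unfold PassesThrough at h ⊢
  omega

end BlockWire

lemma mem_nodesOn {w : List ℕ} {r j : ℕ} : j ∈ nodesOn w r ↔ ValidNode w j ∧ NodeOnWire w j r := by
  simp only [nodesOn, List.mem_filter, List.mem_map, List.mem_range, decide_eq_true_eq, ValidNode]
  refine and_congr_left fun _ => ⟨?_, fun h => ⟨j - 1, by omega, by omega⟩⟩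
  rintro ⟨i, hi, rfl⟩
  omega

lemma mem_tailList {w : List ℕ} {r a j : ℕ} :
    j ∈ tailList w r a ↔ ValidNode w j ∧ NodeOnWire w j r ∧ a < j := by
  simp only [tailList, List.mem_filter, mem_nodesOn, decide_eq_true_eq, and_assoc]

lemma mem_segList {w : List ℕ} {r a b j : ℕ} : j ∈ segList w r a b ↔
    ValidNode w j ∧ NodeOnWire w j r ∧ min a b < j ∧ j < max a b := by
  simp only [segList, List.mem_filter, mem_nodesOn, decide_eq_true_eq, and_assoc]

lemma segList_comm (w : List ℕ) (r a b : ℕ) : segList w r a b = segList w r b a := by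
  simp only [segList, min_comm, max_comm]

lemma nodup_tailList (w : List ℕ) (r a : ℕ) : (tailList w r a).Nodup :=
  ((List.nodup_range.map (add_left_injective 1)).filter _).filter _

namespace BlockDiagram

variable {σ : ℕ → Bool} {n : ℕ} {w : List ℕ} {nd : ℕ → ℕ → ℕ} (h : BlockDiagram σ n w nd)
  {κ p : ℕ}

include h

lemma validNode (hκp : BlockIndex n κ p) : ValidNode w (nd κ p) :=
  ⟨h.one_le hκp, h.length_eq ▸ h.le_Dim hκp⟩

lemma exists_nd_eq {j : ℕ} (hj : ValidNode w j) : ∃ κ p, BlockIndex n κ p ∧ nd κ p = j :=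
  h.exists_eq hj.1 (h.length_eq ▸ hj.2)

lemma nodeOnWire (hκp : BlockIndex n κ p) : NodeOnWire w (nd κ p) (blockWire σ n κ p) :=
  (h.nodeOnWire_iff hκp).2 (.inl rfl)

lemma nodeOnWire_last (hκp : BlockIndex n κ p) :
    NodeOnWire w (nd κ p) (blockWire σ n κ (κ + 1)) :=
  (h.nodeOnWire_iff hκp).2 (.inr rfl)

lemma wire_mem (hκp : BlockIndex n κ p) {r : ℕ} (hr : NodeOnWire w (nd κ p) r) :
    offset σ n κ < r ∧ r ≤ offset σ n κ + κ + 1 := by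
  have ⟨hp, hpκ, _⟩ := hκp
  rcases (h.nodeOnWire_iff hκp).1 hr with rfl | rfl
  · exact ⟨lt_blockWire hp (by omega), blockWire_le hp (by omega)⟩
  · exact ⟨lt_blockWire (by omega) le_rfl, blockWire_le (by omega) le_rfl⟩

lemma otherWire_blockWire (hκp : BlockIndex n κ p) :
    otherWire w (nd κ p) (blockWire σ n κ p) = blockWire σ n κ (κ + 1) := by
  have hX := h.nodeOnWire hκp
  have hY := h.nodeOnWire_last hκp
  have hne : blockWire σ n κ p ≠ blockWire σ n κ (κ + 1) := fun e => by
    have := blockWire_injective (hκp.le_block.trans κ.le_succ) le_rfl e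
    have := hκp.le_block
    omega
  unfold NodeOnWire at hX hY
  unfold otherWire
  split_ifs <;> omega

lemma otherWire_last (hκp : BlockIndex n κ p) :
    otherWire w (nd κ p) (blockWire σ n κ (κ + 1)) = blockWire σ n κ p := by
  have hX := h.nodeOnWire hκp
  have hY := h.nodeOnWire_last hκp
  have hother := h.otherWire_blockWire hκp
  unfold NodeOnWire at hX hY
  unfold otherWire at hother ⊢
  split_ifs at hother ⊢ <;> omega

lemma lt_iff_of_nodeOnWire {κ' p' r : ℕ} (hκp : BlockIndex n κ p) (hκp' : BlockIndex n κ' p')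
    (hr : NodeOnWire w (nd κ p) r) (hr' : NodeOnWire w (nd κ' p') r) :
    nd κ p < nd κ' p' ↔ κ < κ' ∨ κ = κ' ∧ p < p' :=
  h.lt_iff hκp hκp' (.inr ⟨r, hr, hr'⟩)

end BlockDiagram

/-! ### Rigorous paths of a block diagram -/

/-- The `p`-th node is the last node of the `κ`-th block on the wire `r`. -/
def ExitsAt (σ : ℕ → Bool) (n κ p r : ℕ) : Prop :=
  r = blockWire σ n κ p ∨ p = κ ∧ r = blockWire σ n κ (κ + 1)

/-- The rigorous path around the `p`-th column of the `κ`-th block: it enters the block on one of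
the wires number `p` and `p + 1` of the block and leaves it on the other, switching in between to
the last wire of the block. -/
def blockPath (σ : ℕ → Bool) (n : ℕ) (nd : ℕ → ℕ → ℕ) (κ p : ℕ) : ℕ × List ℕ :=
  if σ κ then (blockWire σ n κ p, if p < κ then [nd κ p, nd κ (p + 1)] else [nd κ p])
  else (blockWire σ n κ (p + 1), if p < κ then [nd κ (p + 1), nd κ p] else [nd κ p])

namespace BlockDiagram

variable {σ : ℕ → Bool} {n : ℕ} {w : List ℕ} {nd : ℕ → ℕ → ℕ} (h : BlockDiagram σ n w nd)
  {κ p k r : ℕ} {ms : List ℕ}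

include h

lemma nodeOnWire_of_exitsAt (hκp : BlockIndex n κ p) (hr : ExitsAt σ n κ p r) :
    NodeOnWire w (nd κ p) r := by
  rcases hr with rfl | ⟨-, rfl⟩
  · exact h.nodeOnWire hκp
  · exact h.nodeOnWire_last hκp

lemma exists_of_lt_of_exitsAt (hκp : BlockIndex n κ p) (hr : ExitsAt σ n κ p r) {j : ℕ}
    (hj : ValidNode w j) (hjr : NodeOnWire w j r) (hlt : nd κ p < j) :
    ∃ κ' p', κ < κ' ∧ BlockIndex n κ' p' ∧ nd κ' p' = j ∧ blockWire σ n κ' p' = r := by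
  obtain ⟨κ', p', hκp', rfl⟩ := h.exists_nd_eq hj
  have hon := h.nodeOnWire_of_exitsAt hκp hr
  have hmem := h.wire_mem hκp hon
  have hjr' := (h.nodeOnWire_iff hκp').1 hjr
  have ⟨_, hpκ, _⟩ := hκp
  rcases (h.lt_iff_of_nodeOnWire hκp hκp' hon hjr).1 hlt with hκ | ⟨rfl, hpp'⟩
  · refine ⟨κ', p', hκ, hκp', rfl, (hjr'.resolve_right fun hlast => ?_).symm⟩
    cases hσ : σ κ'
    · have := offset_nested_asc hκ hκp'.block_le hσ
      omega
    · have := offset_nested_desc hκ hκp'.block_le hσ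
      omega
  · have hp'κ := hκp'.le_block
    have hr : r = blockWire σ n κ p := hr.resolve_right fun hlast => by omega
    rcases hjr' with hjr' | hjr' <;>
    · have := blockWire_injective (by omega) (by omega) (hr.symm.trans hjr')
      omega

lemma travelOK_last_of_desc (hκp : BlockIndex n κ p) (hpκ : p < κ) (hσ : σ κ = true)
    (hk : k ≤ blockWire σ n κ p)
    (ht : TravelOK w k (blockWire σ n κ (κ + 1)) (nd κ p) ms) :
    ∃ ms', ms = nd κ (p + 1) :: ms' ∧
      TravelOK w k (blockWire σ n κ (p + 1)) (nd κ (p + 1)) ms' := by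
  have hnext : BlockIndex n κ (p + 1) := ⟨by omega, hpκ, hκp.block_le⟩
  have hlast := h.nodeOnWire_last hκp
  have hother := h.otherWire_last hnext
  have hwire := blockWire_of_desc (n := n) hσ
  have hw := hwire (p + 1)
  have hwlast := hwire (κ + 1)
  rw [hwire p] at hk
  cases ms with
  | nil =>
    have := ht.1
    omega
  | cons m ms =>
    obtain ⟨hm, hmr, hdir, hseg, ht⟩ := ht
    rw [if_neg (by omega)] at hdir
    obtain ⟨κ', p', hκp', rfl⟩ := h.exists_nd_eq hm
    have hafter := (h.lt_iff_of_nodeOnWire hκp hκp' hlast hmr).1 hdir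
    by_cases hm : κ' = κ ∧ p' = p + 1
    · obtain ⟨rfl, rfl⟩ := hm
      exact ⟨ms, rfl, by rwa [hother] at ht⟩
    · -- passing straight through the next node of the block would be a forbidden fragment
      refine absurd (.inr ⟨by omega, by omega, by omega⟩) (hseg (nd κ (p + 1)) ?_)
      have hlt := (h.lt_iff_of_nodeOnWire hκp hnext hlast (h.nodeOnWire_last hnext)).2
        (.inr ⟨rfl, p.lt_succ_self⟩)
      have hlt' := (h.lt_iff_of_nodeOnWire hnext hκp' (h.nodeOnWire_last hnext) hmr).2 (by omega)
      rw [mem_segList, min_eq_left hdir.le, max_eq_right hdir.le]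
      exact ⟨h.validNode hnext, h.nodeOnWire_last hnext, hlt, hlt'⟩

lemma travelOK_last_of_asc (hκp : BlockIndex n κ p) (hσ : σ κ = false)
    (hk : blockWire σ n κ (κ + 1) ≤ k)
    (ht : TravelOK w k (blockWire σ n κ (κ + 1)) (nd κ p) ms) :
    ∃ q ms', BlockIndex n κ q ∧ q < p ∧ ms = nd κ q :: ms' ∧
      TravelOK w k (blockWire σ n κ q) (nd κ q) ms' := by
  cases ms with
  | nil =>
    have := ht.1
    omega
  | cons m ms =>
    obtain ⟨hm, hmr, hdir, -, ht⟩ := ht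
    rw [if_pos hk] at hdir
    obtain ⟨κ', q, hκq, rfl⟩ := h.exists_nd_eq hm
    rcases (h.lt_iff_of_nodeOnWire hκq hκp hmr (h.nodeOnWire_last hκp)).1 hdir with hκ | ⟨rfl, hqp⟩
    · have := h.wire_mem hκq hmr
      have := offset_nested_asc hκ hκp.block_le hσ
      omega
    · exact ⟨q, ms, hκq, hqp, rfl, by rwa [h.otherWire_last hκq] at ht⟩

/-- Below a block, a path travelling downward can only switch to wires further to the right. -/
lemma exists_next_exit (hκp : BlockIndex n κ p) (hr : ExitsAt σ n κ p r)
    (hk : PassesThrough σ n κ k) (hkr : k + 1 ≤ r) {m : ℕ}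
    (ht : TravelOK w k r (nd κ p) (m :: ms)) :
    ∃ κ' p' r' ms', BlockIndex n κ' p' ∧ ExitsAt σ n κ' p' r' ∧ PassesThrough σ n κ' k ∧
      k + 1 < r' ∧ ms'.length ≤ ms.length ∧ TravelOK w k r' (nd κ' p') ms' := by
  obtain ⟨hm, hmr, hdir, -, ht⟩ := ht
  rw [if_neg (by omega)] at hdir
  obtain ⟨κ', p', hκ, hκp', rfl, rfl⟩ := h.exists_of_lt_of_exitsAt hκp hr hm hmr hdir
  have hκ' := hκp'.block_le
  have hpass := hk.of_lt hκ hκ'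
  have hk' : k ≤ offset σ n κ + κ := hk.2
  rw [h.otherWire_blockWire hκp'] at ht
  cases hσ : σ κ'
  · have := offset_nested_asc hκ hκ' hσ
    have := hk.1
    obtain ⟨q, ms', hκq, hqp, rfl, ht'⟩ := h.travelOK_last_of_asc hκp' hσ (by omega) ht
    refine ⟨κ', q, _, ms', hκq, .inl rfl, hpass, ?_, Nat.le_succ _, ht'⟩
    have := hκp'.le_block
    rw [blockWire_of_asc hσ] at hkr ⊢
    omega
  · have := offset_nested_desc hκ hκ' hσ
    rcases hκp'.le_block.eq_or_lt with rfl | hpκ'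
    · exact ⟨p', p', _, ms, hκp', .inr ⟨rfl, rfl⟩, hpass, by omega, le_rfl, ht⟩
    · obtain ⟨ms', rfl, ht'⟩ := h.travelOK_last_of_desc hκp' hpκ' hσ (by omega) ht
      refine ⟨κ', p' + 1, _, ms', ⟨by omega, hpκ', hκ'⟩, .inl rfl, hpass, ?_, Nat.le_succ _, ht'⟩
      rw [blockWire_of_desc hσ] at hkr ⊢
      omega

lemma eq_succ_of_travelOK (hκp : BlockIndex n κ p) (hr : ExitsAt σ n κ p r)
    (hk : PassesThrough σ n κ k) (hkr : k + 1 ≤ r) (ht : TravelOK w k r (nd κ p) ms) :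
    r = k + 1 ∧ ms = [] := by
  induction hlen : ms.length using Nat.strong_induction_on generalizing κ p r ms with
  | _ len ih =>
    cases ms with
    | nil => exact ⟨ht.1, rfl⟩
    | cons m ms =>
      obtain ⟨κ', p', r', ms', hκp', hr', hk', hlt, hle, ht'⟩ :=
        h.exists_next_exit hκp hr hk hkr ht
      rw [List.length_cons] at hlen
      have := (ih _ (by omega) hκp' hr' hk' hlt.le ht' rfl).1
      omega

lemma not_travelOK_of_wires_le {κ' : ℕ} (hκ' : κ' ≤ n) (hk : offset σ n κ' + κ' + 1 ≤ k)
    (hκp : BlockIndex n κ p) (hκ : κ ≤ κ') (hr : NodeOnWire w (nd κ p) r) :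
    ¬ TravelOK w k r (nd κ p) ms := by
  have hrk : r ≤ k := by
    have := h.wire_mem hκp hr
    have := offset_add_le (σ := σ) hκ hκ'
    omega
  induction ms generalizing κ p r with
  | nil =>
    intro ht
    have := ht.1
    omega
  | cons m ms ih =>
    rintro ⟨hm, hmr, hdir, -, ht⟩
    rw [if_pos hrk] at hdir
    obtain ⟨κ'', q, hκq, rfl⟩ := h.exists_nd_eq hm
    have hκ'' : κ'' ≤ κ' := by
      have := (h.lt_iff_of_nodeOnWire hκq hκp hmr hr).1 hdir
      omega
    have hother : NodeOnWire w (nd κ'' q) (otherWire w (nd κ'' q) r) := by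
      rcases (h.nodeOnWire_iff hκq).1 hmr with rfl | rfl
      · rw [h.otherWire_blockWire hκq]
        exact h.nodeOnWire_last hκq
      · rw [h.otherWire_last hκq]
        exact h.nodeOnWire hκq
    refine ih hκq hκ'' hother ?_ ht
    have := h.wire_mem hκq hother
    have := offset_add_le (σ := σ) hκ'' hκ'
    omega

lemma eq_blockPath_of_desc (hσ : σ κ = true) (hκp : BlockIndex n κ p)
    (hk : NodeOnWire w (nd κ p) k) (ht : TravelOK w k (otherWire w (nd κ p) k) (nd κ p) ms) :
    (k, nd κ p :: ms) = blockPath σ n nd κ p := by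
  have ⟨hp, hpκ, hκn⟩ := hκp
  have hwire := blockWire_of_desc (n := n) hσ
  rw [blockPath, if_pos hσ]
  rcases (h.nodeOnWire_iff hκp).1 hk with rfl | rfl
  · have hpass : PassesThrough σ n κ (blockWire σ n κ p) := by
      rw [hwire, PassesThrough]
      omega
    rw [h.otherWire_blockWire hκp] at ht
    rcases hpκ.eq_or_lt with rfl | hpκ
    · obtain ⟨-, rfl⟩ := h.eq_succ_of_travelOK hκp (.inr ⟨rfl, rfl⟩) hpass
        (by rw [hwire, hwire]; omega) ht
      rw [if_neg (lt_irrefl p)]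
    · obtain ⟨ms', rfl, ht'⟩ := h.travelOK_last_of_desc hκp hpκ hσ le_rfl ht
      obtain ⟨-, rfl⟩ := h.eq_succ_of_travelOK ⟨by omega, hpκ, hκn⟩ (.inl rfl) hpass
        (by rw [hwire, hwire]; omega) ht'
      rw [if_pos hpκ]
  · rw [h.otherWire_last hκp] at ht
    exact absurd ht
      (h.not_travelOK_of_wires_le hκn (by rw [hwire]; omega) hκp le_rfl (h.nodeOnWire hκp))

lemma exists_eq_blockPath_of_asc (hσ : σ κ = false) (hκp : BlockIndex n κ p)
    (hk : NodeOnWire w (nd κ p) k) (ht : TravelOK w k (otherWire w (nd κ p) k) (nd κ p) ms) :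
    ∃ q, BlockIndex n κ q ∧ (k, nd κ p :: ms) = blockPath σ n nd κ q := by
  have ⟨hp, hpκ, hκn⟩ := hκp
  have hwire := blockWire_of_asc (n := n) hσ
  simp only [blockPath, hσ, Bool.false_eq_true, if_false]
  rcases (h.nodeOnWire_iff hκp).1 hk with rfl | rfl
  · rw [h.otherWire_blockWire hκp] at ht
    obtain ⟨q, ms', hκq, hqp, rfl, ht'⟩ := h.travelOK_last_of_asc hκp hσ
      (by rw [hwire, hwire]; omega) ht
    have := hκq.one_le
    obtain ⟨hq, rfl⟩ := h.eq_succ_of_travelOK hκq (.inl rfl)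
      (by rw [hwire, PassesThrough]; omega) (by rw [hwire, hwire]; omega) ht'
    rw [hwire, hwire] at hq
    obtain rfl : p = q + 1 := by omega
    exact ⟨q, hκq, by rw [if_pos (Nat.lt_of_succ_le hpκ)]⟩
  · rw [h.otherWire_last hκp] at ht
    obtain ⟨hlast, rfl⟩ := h.eq_succ_of_travelOK hκp (.inl rfl)
      (by rw [hwire, PassesThrough]; omega) (by rw [hwire, hwire]; omega) ht
    rw [hwire, hwire] at hlast
    obtain rfl : p = κ := by omega
    exact ⟨p, hκp, by rw [if_neg (lt_irrefl p)]⟩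

lemma exists_eq_blockPath (hP : IsGPPath n w k ms) :
    ∃ κ p, BlockIndex n κ p ∧ (k, ms) = blockPath σ n nd κ p := by
  obtain ⟨-, -, hP, -⟩ := hP
  cases ms with
  | nil => exact hP.elim
  | cons m ms =>
    obtain ⟨hm, hmk, -, ht⟩ := hP
    obtain ⟨κ, p, hκp, rfl⟩ := h.exists_nd_eq hm
    cases hσ : σ κ
    · exact ⟨κ, h.exists_eq_blockPath_of_asc hσ hκp hmk ht⟩
    · exact ⟨κ, p, hκp, h.eq_blockPath_of_desc hσ hκp hmk ht⟩

end BlockDiagram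

lemma exists_blockPath_last_eq (σ : ℕ → Bool) (n : ℕ) (nd : ℕ → ℕ → ℕ) (κ : ℕ) :
    ∃ k, blockPath σ n nd κ κ = (k, [nd κ κ]) ∧ ExitsAt σ n κ κ k ∧ ExitsAt σ n κ κ (k + 1) := by
  cases hσ : σ κ <;>
    simp only [blockPath, hσ, lt_irrefl, Bool.false_eq_true, if_false, if_true]
  · refine ⟨_, rfl, .inr ⟨rfl, rfl⟩, .inl ?_⟩
    simp only [blockWire_of_asc hσ]
    omega
  · refine ⟨_, rfl, .inl rfl, .inr ⟨rfl, ?_⟩⟩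
    simp only [blockWire_of_desc hσ]
    omega

namespace BlockDiagram

variable {σ : ℕ → Bool} {n : ℕ} {w : List ℕ} {nd : ℕ → ℕ → ℕ} (h : BlockDiagram σ n w nd)
  {κ p q k r s : ℕ}

include h

lemma exists_of_mem_tailList (hκp : BlockIndex n κ p) (hr : ExitsAt σ n κ p r) {j : ℕ}
    (hj : j ∈ tailList w r (nd κ p)) :
    ∃ κ' p', κ < κ' ∧ BlockIndex n κ' p' ∧ nd κ' p' = j ∧ blockWire σ n κ' p' = r := by
  obtain ⟨hj, hjr, hlt⟩ := mem_tailList.1 hj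
  exact h.exists_of_lt_of_exitsAt hκp hr hj hjr hlt

lemma passesThrough (hκp : BlockIndex n κ p) (hκq : BlockIndex n κ q)
    (hk : ExitsAt σ n κ p k) (hk' : ExitsAt σ n κ q (k + 1)) : PassesThrough σ n κ k := by
  have := h.wire_mem hκp (h.nodeOnWire_of_exitsAt hκp hk)
  have := h.wire_mem hκq (h.nodeOnWire_of_exitsAt hκq hk')
  unfold PassesThrough
  omega

lemma not_forbidden_of_mem_tailList (hκp : BlockIndex n κ p) (hr : ExitsAt σ n κ p r)
    (hk : PassesThrough σ n κ k) (hrk : r = k ∨ r = k + 1) :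
    ∀ j ∈ tailList w r (nd κ p), ¬ Forbidden w k j r := by
  intro j hj
  obtain ⟨κ', p', hκ, hκp', rfl, rfl⟩ := h.exists_of_mem_tailList hκp hr hj
  rw [Forbidden, h.otherWire_blockWire hκp']
  unfold PassesThrough at hk
  cases hσ : σ κ'
  · have := offset_nested_asc hκ hκp'.block_le hσ
    omega
  · have := offset_nested_desc hκ hκp'.block_le hσ
    omega

lemma nodup_tailList_append {L : List ℕ} (hκp : BlockIndex n κ p) (hκq : BlockIndex n κ q)
    (hr : ExitsAt σ n κ p r) (hs : ExitsAt σ n κ q s) (hrs : r ≠ s) (hL : L.Nodup)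
    (hLκ : ∀ j ∈ L, ∃ l, BlockIndex n κ l ∧ nd κ l = j) :
    (tailList w r (nd κ p) ++ (L ++ tailList w s (nd κ q))).Nodup := by
  have hdisj {p r} (hκp : BlockIndex n κ p) (hr : ExitsAt σ n κ p r) :
      L.Disjoint (tailList w r (nd κ p)) := by
    intro j hjL hj
    obtain ⟨l, hκl, rfl⟩ := hLκ j hjL
    obtain ⟨κ', p', hκ, hκp', heq, -⟩ := h.exists_of_mem_tailList hκp hr hj
    exact hκ.ne' (h.injective hκp' hκl heq).1
  have htails : (tailList w r (nd κ p)).Disjoint (tailList w s (nd κ q)) := by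
    intro j hj hj'
    obtain ⟨κ₁, p₁, -, hκp₁, rfl, rfl⟩ := h.exists_of_mem_tailList hκp hr hj
    obtain ⟨κ₂, p₂, -, hκp₂, heq, rfl⟩ := h.exists_of_mem_tailList hκq hs hj'
    obtain ⟨rfl, rfl⟩ := h.injective hκp₂ hκp₁ heq
    exact hrs rfl
  exact (nodup_tailList _ _ _).append
    (hL.append (nodup_tailList _ _ _) (hdisj hκq hs))
    (List.disjoint_append_right.2 ⟨(hdisj hκp hr).symm, htails⟩)

lemma otherWire_of_exitsAt (hκ : BlockIndex n κ κ) (hk : ExitsAt σ n κ κ k)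
    (hk' : ExitsAt σ n κ κ (k + 1)) : otherWire w (nd κ κ) k = k + 1 := by
  rcases hk with hk | ⟨-, hk⟩
  · rw [hk, h.otherWire_blockWire hκ]
    rcases hk' with hk' | ⟨-, hk'⟩ <;> omega
  · rw [hk, h.otherWire_last hκ]
    rcases hk' with hk' | ⟨-, hk'⟩ <;> omega

lemma isGPPath_singleton (hκ : BlockIndex n κ κ) (hk : ExitsAt σ n κ κ k)
    (hk' : ExitsAt σ n κ κ (k + 1)) : IsGPPath n w k [nd κ κ] := by
  have hpass := h.passesThrough hκ hκ hk hk'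
  have hkn : 1 ≤ k ∧ k ≤ n := by
    have := offset_le (σ := σ) hκ.block_le
    unfold PassesThrough at hpass
    omega
  have hother := h.otherWire_of_exitsAt hκ hk hk'
  refine ⟨hkn.1, hkn.2, ⟨h.validNode hκ, h.nodeOnWire_of_exitsAt hκ hk,
    h.not_forbidden_of_mem_tailList hκ hk hpass (.inl rfl), ?_⟩, ?_⟩
  · rw [hother]
    exact ⟨rfl, h.not_forbidden_of_mem_tailList hκ hk' hpass (.inr rfl)⟩
  · rw [visitList, visitTail, hother]
    exact h.nodup_tailList_append (L := [nd κ κ]) hκ hκ hk hk' k.lt_succ_self.ne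
      (List.nodup_singleton _) (by simpa using ⟨κ, hκ, rfl⟩)

lemma nd_lt_succ (hκp : BlockIndex n κ p) (hpκ : p < κ) : nd κ p < nd κ (p + 1) :=
  have hnext : BlockIndex n κ (p + 1) := ⟨by omega, hpκ, hκp.block_le⟩
  (h.lt_iff_of_nodeOnWire hκp hnext (h.nodeOnWire_last hκp) (h.nodeOnWire_last hnext)).2
    (.inr ⟨rfl, p.lt_succ_self⟩)

lemma segList_last_eq_nil (hκp : BlockIndex n κ p) (hpκ : p < κ) :
    segList w (blockWire σ n κ (κ + 1)) (nd κ p) (nd κ (p + 1)) = [] := by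
  have hnext : BlockIndex n κ (p + 1) := ⟨by omega, hpκ, hκp.block_le⟩
  have hlt := h.nd_lt_succ hκp hpκ
  refine List.eq_nil_iff_forall_not_mem.2 fun j hj => ?_
  rw [mem_segList, min_eq_left hlt.le, max_eq_right hlt.le] at hj
  obtain ⟨hj, hjr, hpj, hjp⟩ := hj
  obtain ⟨κ', p', hκp', rfl⟩ := h.exists_nd_eq hj
  have := (h.lt_iff_of_nodeOnWire hκp hκp' (h.nodeOnWire_last hκp) hjr).1 hpj
  have := (h.lt_iff_of_nodeOnWire hκp' hnext hjr (h.nodeOnWire_last hnext)).1 hjp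
  omega

lemma travel_last_of_adjacent (hκp : BlockIndex n κ p) (hκq : BlockIndex n κ q)
    (hpq : blockWire σ n κ q = blockWire σ n κ p + 1) :
    (if blockWire σ n κ (κ + 1) ≤ blockWire σ n κ p then nd κ q < nd κ p else nd κ p < nd κ q) ∧
      segList w (blockWire σ n κ (κ + 1)) (nd κ p) (nd κ q) = [] := by
  have hp := hκp.le_block
  have hq := hκq.le_block
  cases hσ : σ κ
  · have hwire := blockWire_of_asc (n := n) hσ
    rw [hwire, hwire] at hpq
    obtain rfl : p = q + 1 := by omega
    rw [if_pos (by rw [hwire, hwire]; omega), segList_comm]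
    exact ⟨h.nd_lt_succ hκq hp, h.segList_last_eq_nil hκq hp⟩
  · have hwire := blockWire_of_desc (n := n) hσ
    rw [hwire, hwire] at hpq
    obtain rfl : q = p + 1 := by omega
    rw [if_neg (by rw [hwire, hwire]; omega)]
    exact ⟨h.nd_lt_succ hκp hq, h.segList_last_eq_nil hκp hq⟩

lemma isGPPath_pair (hκp : BlockIndex n κ p) (hκq : BlockIndex n κ q)
    (hpq : blockWire σ n κ q = blockWire σ n κ p + 1) :
    IsGPPath n w (blockWire σ n κ p) [nd κ p, nd κ q] := by
  set k := blockWire σ n κ p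
  have hq : ExitsAt σ n κ q (k + 1) := .inl hpq.symm
  have hpass := h.passesThrough hκp hκq (.inl rfl) hq
  have hkn : 1 ≤ k ∧ k ≤ n := by
    have := offset_le (σ := σ) hκp.block_le
    unfold PassesThrough at hpass
    omega
  obtain ⟨hdir, hseg⟩ := h.travel_last_of_adjacent hκp hκq hpq
  have hne : nd κ p ≠ nd κ q := by
    split_ifs at hdir <;> omega
  have hother : otherWire w (nd κ p) k = blockWire σ n κ (κ + 1) := h.otherWire_blockWire hκp
  have hother' : otherWire w (nd κ q) (blockWire σ n κ (κ + 1)) = k + 1 :=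
    (h.otherWire_last hκq).trans hpq
  refine ⟨hkn.1, hkn.2, ⟨h.validNode hκp, h.nodeOnWire hκp,
    h.not_forbidden_of_mem_tailList hκp (.inl rfl) hpass (.inl rfl), ?_⟩, ?_⟩
  · rw [hother]
    refine ⟨h.validNode hκq, h.nodeOnWire_last hκq, hdir, by simp [hseg], ?_⟩
    rw [hother']
    exact ⟨rfl, h.not_forbidden_of_mem_tailList hκq hq hpass (.inr rfl)⟩
  · rw [visitList, visitTail, visitTail, hother, hother', hseg, List.nil_append]
    exact h.nodup_tailList_append (L := [nd κ p, nd κ q]) hκp hκq (.inl rfl) hq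
      k.lt_succ_self.ne (by simpa using hne) (by simpa using ⟨⟨p, hκp, rfl⟩, ⟨q, hκq, rfl⟩⟩)

lemma isGPPath_blockPath (hκp : BlockIndex n κ p) :
    IsGPPath n w (blockPath σ n nd κ p).1 (blockPath σ n nd κ p).2 := by
  have ⟨hp, hpκ, hκn⟩ := hκp
  rcases hpκ.eq_or_lt with rfl | hpκ
  · obtain ⟨k, hpath, hk, hk'⟩ := exists_blockPath_last_eq σ n nd p
    rw [hpath]
    exact h.isGPPath_singleton hκp hk hk'
  · have hnext : BlockIndex n κ (p + 1) := ⟨by omega, hpκ, hκn⟩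
    cases hσ : σ κ <;> simp only [blockPath, hσ, hpκ, Bool.false_eq_true, if_false, if_true]
    · refine h.isGPPath_pair hnext hκp ?_
      simp only [blockWire_of_asc hσ]
      omega
    · refine h.isGPPath_pair hκp hnext ?_
      simp only [blockWire_of_desc hσ]
      omega

theorem mem_GP_iff {P : ℕ × List ℕ} :
    P ∈ GP n w ↔ ∃ κ p, BlockIndex n κ p ∧ P = blockPath σ n nd κ p := by
  refine ⟨fun hP => h.exists_eq_blockPath hP, ?_⟩
  rintro ⟨κ, p, hκp, rfl⟩
  exact h.isGPPath_blockPath hκp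

end BlockDiagram

/-! ### The string cone of a block diagram -/

lemma sum_ite_eq_succ_mul {n a : ℕ} (ha : 1 ≤ a) (c : ℝ) (t : Fin (Dim n) → ℝ) :
    ∑ j : Fin (Dim n), (if a = (j : ℕ) + 1 then c else 0) * t j = c * entry n t (a - 1) := by
  simp only [ite_mul, zero_mul]
  unfold entry
  split_ifs with hlt
  · rw [Finset.sum_eq_single ⟨a - 1, hlt⟩, if_pos (by simp only; omega)]
    · exact fun j _ hj => if_neg fun hja => hj (Fin.ext (by simp only; omega))
    · exact fun hnot => absurd (Finset.mem_univ _) hnot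
  · rw [mul_zero]
    exact Finset.sum_eq_zero fun j _ => if_neg (by omega)

lemma stringIneq_eq_sum_pathSwitches {n : ℕ} {w : List ℕ} {P : ℕ × List ℕ}
    (hP : ∀ e ∈ pathSwitches w P.1 P.2, 1 ≤ e.1) (t : Fin (Dim n) → ℝ) :
    stringIneq n w P t = ((pathSwitches w P.1 P.2).map fun e =>
      (if e.2.1 < e.2.2 then 1 else -1) * entry n t (e.1 - 1)).sum := by
  unfold stringIneq normalVec coeff
  generalize pathSwitches w P.1 P.2 = L at hP
  induction L with
  | nil => simp only [List.map_nil, List.sum_nil, zero_mul, Finset.sum_const_zero]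
  | cons e L ih =>
    obtain ⟨he, hL⟩ := List.forall_mem_cons.1 hP
    simp only [List.map_cons, List.sum_cons, add_mul, Finset.sum_add_distrib]
    rw [ih hL, sum_ite_eq_succ_mul he]

/-- The coordinates of a point of `ℝ^N` arranged in blocks, extended by zero. -/
def blockCoord (n : ℕ) (nd : ℕ → ℕ → ℕ) (t : Fin (Dim n) → ℝ) (κ p : ℕ) : ℝ :=
  if BlockIndex n κ p then entry n t (nd κ p - 1) else 0

namespace BlockDiagram

variable {σ : ℕ → Bool} {n : ℕ} {w : List ℕ} {nd : ℕ → ℕ → ℕ} (h : BlockDiagram σ n w nd)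
  {κ p q k : ℕ} (t : Fin (Dim n) → ℝ)

include h

lemma stringIneq_singleton (hκ : BlockIndex n κ κ) (hk : ExitsAt σ n κ κ k)
    (hk' : ExitsAt σ n κ κ (k + 1)) :
    stringIneq n w (k, [nd κ κ]) t = blockCoord n nd t κ κ := by
  have hswitch : pathSwitches w k [nd κ κ] = [(nd κ κ, k, k + 1)] := by
    simp only [pathSwitches, h.otherWire_of_exitsAt hκ hk hk']
  rw [stringIneq_eq_sum_pathSwitches] <;> simp only [hswitch]
  · simp [blockCoord, hκ]
  · simpa using h.one_le hκ

lemma stringIneq_pair (hκp : BlockIndex n κ p) (hκq : BlockIndex n κ q)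
    (hpq : blockWire σ n κ q = blockWire σ n κ p + 1) :
    stringIneq n w (blockWire σ n κ p, [nd κ p, nd κ q]) t =
      if σ κ then blockCoord n nd t κ p - blockCoord n nd t κ q
      else blockCoord n nd t κ q - blockCoord n nd t κ p := by
  have hswitch : pathSwitches w (blockWire σ n κ p) [nd κ p, nd κ q] =
      [(nd κ p, blockWire σ n κ p, blockWire σ n κ (κ + 1)),
        (nd κ q, blockWire σ n κ (κ + 1), blockWire σ n κ q)] := by
    simp only [pathSwitches, h.otherWire_blockWire hκp, h.otherWire_last hκq]
  have := hκp.le_block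
  have := hκq.le_block
  rw [stringIneq_eq_sum_pathSwitches]
  · simp only [hswitch, List.map_cons, List.map_nil, List.sum_cons, List.sum_nil, blockCoord,
      if_pos hκp, if_pos hκq]
    cases hσ : σ κ
    · have hwire := blockWire_of_asc (n := n) hσ
      simp only [hwire] at hpq ⊢
      rw [if_neg (by omega), if_pos (by omega), if_neg Bool.false_ne_true]
      ring
    · have hwire := blockWire_of_desc (n := n) hσ
      simp only [hwire] at hpq ⊢
      rw [if_pos (by omega), if_neg (by omega), if_pos trivial]
      ring
  · simpa [hswitch] using ⟨h.one_le hκp, h.one_le hκq⟩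

lemma stringIneq_blockPath (hκp : BlockIndex n κ p) :
    stringIneq n w (blockPath σ n nd κ p) t =
      blockCoord n nd t κ p - blockCoord n nd t κ (p + 1) := by
  have ⟨hp, hpκ, hκn⟩ := hκp
  rcases hpκ.eq_or_lt with rfl | hpκ
  · obtain ⟨k, hpath, hk, hk'⟩ := exists_blockPath_last_eq σ n nd p
    rw [hpath, h.stringIneq_singleton t hκp hk hk', blockCoord, blockCoord,
      if_neg fun h : BlockIndex n p (p + 1) => h.le_block.not_gt p.lt_succ_self, sub_zero]
  · have hnext : BlockIndex n κ (p + 1) := ⟨by omega, hpκ, hκn⟩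
    cases hσ : σ κ <;> simp only [blockPath, hσ, hpκ, Bool.false_eq_true, if_false, if_true]
    · have hadj : blockWire σ n κ p = blockWire σ n κ (p + 1) + 1 := by
        simp only [blockWire_of_asc hσ]
        omega
      rw [h.stringIneq_pair t hnext hκp hadj, hσ, if_neg Bool.false_ne_true]
    · have hadj : blockWire σ n κ (p + 1) = blockWire σ n κ p + 1 := by
        simp only [blockWire_of_desc hσ]
        omega
      rw [h.stringIneq_pair t hκp hnext hadj, if_pos hσ]

theorem mem_stringCone_iff : t ∈ stringCone n w ↔
    ∀ κ p, BlockIndex n κ p → blockCoord n nd t κ (p + 1) ≤ blockCoord n nd t κ p := by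
  refine ⟨fun ht κ p hκp => ?_, fun ht P hP => ?_⟩
  · rw [← sub_nonneg, ← h.stringIneq_blockPath t hκp]
    exact ht _ (h.mem_GP_iff.2 ⟨κ, p, hκp, rfl⟩)
  · obtain ⟨κ, p, hκp, rfl⟩ := h.mem_GP_iff.1 hP
    rw [h.stringIneq_blockPath t hκp, sub_nonneg]
    exact ht κ p hκp

end BlockDiagram

/-! ### The `λ`-cone of a block diagram -/

/-- The coefficient of a node of column `c'` in the `λ`-inequality of a node of column `c`. -/
def columnCoeff (c c' : ℕ) : ℝ := if c' = c then -2 else if c' = c + 1 ∨ c' + 1 = c then 1 else 0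

lemma columnCoeff_of_not_near {c c' : ℕ} (h : ¬ Near c c') : columnCoeff c c' = 0 := by
  unfold Near at h
  rw [columnCoeff, if_neg (by omega), if_neg (by omega)]

lemma columnCoeff_add_blockCol (σ : ℕ → Bool) {κ p q : ℕ} (a : ℕ) (hp : p ≤ κ) (hq : q ≤ κ) :
    columnCoeff (a + blockCol σ κ p) (a + blockCol σ κ q) =
      (if q = p - 1 ∧ 1 ≤ p then 1 else 0) - 2 * (if q = p then 1 else 0) +
        if q = p + 1 then 1 else 0 := by
  unfold columnCoeff blockCol
  split_ifs <;> first | omega | norm_num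

lemma blockCoord_of_not_blockIndex {n κ p : ℕ} {nd : ℕ → ℕ → ℕ} (t : Fin (Dim n) → ℝ)
    (h : ¬ BlockIndex n κ p) : blockCoord n nd t κ p = 0 := if_neg h

lemma not_blockIndex_zero (n κ : ℕ) : ¬ BlockIndex n κ 0 := fun h => absurd h.one_le (by omega)

lemma not_blockIndex_succ (n κ : ℕ) : ¬ BlockIndex n κ (κ + 1) :=
  fun h => absurd h.le_block (by omega)

lemma sum_mul_columnCoeff_block (σ : ℕ → Bool) {κ p : ℕ} (a : ℕ) (hp : 1 ≤ p) (hpκ : p ≤ κ)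
    {v : ℕ → ℝ} (hv : v 0 = 0) (hv' : v (κ + 1) = 0) :
    ∑ q ∈ Finset.Ioc 0 κ, columnCoeff (a + blockCol σ κ p) (a + blockCol σ κ q) * v q =
      v (p - 1) - 2 * v p + v (p + 1) := by
  have hterm : ∀ q ∈ Finset.Ioc 0 κ,
      columnCoeff (a + blockCol σ κ p) (a + blockCol σ κ q) * v q =
        (if q = p - 1 then v q else 0) - 2 * (if q = p then v q else 0) +
          if q = p + 1 then v q else 0 := by
    intro q hq
    rw [columnCoeff_add_blockCol σ a hpκ (Finset.mem_Ioc.1 hq).2]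
    split_ifs <;> first | omega | ring
  rw [Finset.sum_congr rfl hterm, Finset.sum_add_distrib, Finset.sum_sub_distrib,
    ← Finset.mul_sum, Finset.sum_ite_eq', Finset.sum_ite_eq', Finset.sum_ite_eq',
    if_pos (Finset.mem_Ioc.2 ⟨hp, hpκ⟩)]
  congr 2
  · refine ite_eq_left_iff.2 fun hnot => ?_
    rw [show p - 1 = 0 by rw [Finset.mem_Ioc] at hnot; omega, hv]
  · refine ite_eq_left_iff.2 fun hnot => ?_
    rw [show p = κ by rw [Finset.mem_Ioc] at hnot; omega, hv']

lemma sum_mul_columnCoeff_block_later (σ : ℕ → Bool) {κ p : ℕ} (a : ℕ) (hpκ : p ≤ κ)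
    {v : ℕ → ℝ} (hv : v (κ + 1) = 0) :
    ∑ q ∈ Finset.Ioc 0 κ,
      (if p < q then columnCoeff (a + blockCol σ κ p) (a + blockCol σ κ q) else 0) * v q =
      v (p + 1) := by
  have hterm : ∀ q ∈ Finset.Ioc 0 κ,
      (if p < q then columnCoeff (a + blockCol σ κ p) (a + blockCol σ κ q) else 0) * v q =
        if q = p + 1 then v q else 0 := by
    intro q hq
    rw [columnCoeff_add_blockCol σ a hpκ (Finset.mem_Ioc.1 hq).2]
    split_ifs <;> first | omega | ring
  rw [Finset.sum_congr rfl hterm, Finset.sum_ite_eq']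
  refine ite_eq_left_iff.2 fun hnot => ?_
  rw [show p = κ by rw [Finset.mem_Ioc] at hnot; omega, hv]

/-- What the blocks after the `κ`-th one contribute to the right-hand side of the `λ`-inequality of
a node of column `c` in the `κ`-th block, together with `λ_c`. -/
def residualWeight (σ : ℕ → Bool) (n : ℕ) (lam : ℕ → ℤ) (T : ℕ → ℕ → ℝ) (κ c : ℕ) : ℝ :=
  lam c + ∑ κ' ∈ Finset.Ioc κ n, ∑ q ∈ Finset.Ioc 0 κ',
    columnCoeff c (offset σ n κ' + blockCol σ κ' q) * T κ' q

lemma lam_add_sum_later_eq (σ : ℕ → Bool) {n κ p : ℕ} (lam : ℕ → ℤ) (hκp : BlockIndex n κ p)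
    {T : ℕ → ℕ → ℝ} (hT : T κ (κ + 1) = 0) :
    (lam (offset σ n κ + blockCol σ κ p) : ℝ) +
      ∑ κ' ∈ Finset.Ioc 0 n, ∑ q ∈ Finset.Ioc 0 κ', (if κ < κ' ∨ κ = κ' ∧ p < q then
        columnCoeff (offset σ n κ + blockCol σ κ p) (offset σ n κ' + blockCol σ κ' q) else 0) *
          T κ' q =
      T κ (p + 1) + residualWeight σ n lam T κ (offset σ n κ + blockCol σ κ p) := by
  rw [residualWeight, add_left_comm, ← Finset.sum_Ioc_consecutive _ κ.zero_le hκp.block_le]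
  congr 2
  · rw [Finset.sum_eq_single κ]
    · rw [← sum_mul_columnCoeff_block_later σ (offset σ n κ) hκp.le_block hT]
      simp only [lt_irrefl, true_and, false_or]
    · intro κ' hκ' hne
      rw [Finset.mem_Ioc] at hκ'
      exact Finset.sum_eq_zero fun q _ => by rw [if_neg (by omega), zero_mul]
    · intro hκ
      have := hκp.one_le.trans hκp.le_block
      exact absurd (Finset.mem_Ioc.2 ⟨this, le_rfl⟩) hκ
  · refine Finset.sum_congr rfl fun κ' hκ' => Finset.sum_congr rfl fun q _ => ?_
    rw [if_pos (Or.inl (Finset.mem_Ioc.1 hκ').1)]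

lemma blockCoord_eq {n κ p : ℕ} {nd : ℕ → ℕ → ℕ} (hκp : BlockIndex n κ p)
    (t : Fin (Dim n) → ℝ) {j : Fin (Dim n)} (hj : nd κ p = j + 1) :
    blockCoord n nd t κ p = t j := by
  rw [blockCoord, if_pos hκp, hj, Nat.add_sub_cancel, entry, dif_pos j.2]

lemma BlockNumbering.sum_eq {n : ℕ} {nd : ℕ → ℕ → ℕ} (h : BlockNumbering n nd) (g : ℕ → ℝ)
    (t : Fin (Dim n) → ℝ) : ∑ k : Fin (Dim n), g (k + 1) * t k =
      ∑ κ ∈ Finset.Ioc 0 n, ∑ p ∈ Finset.Ioc 0 κ, g (nd κ p) * blockCoord n nd t κ p := by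
  have hmem : ∀ s : Σ _ : ℕ, ℕ, s ∈ (Finset.Ioc 0 n).sigma (fun κ => Finset.Ioc 0 κ) ↔
      BlockIndex n s.1 s.2 := by
    intro s
    rw [Finset.mem_sigma, Finset.mem_Ioc, Finset.mem_Ioc]
    exact ⟨fun hs => ⟨hs.2.1, hs.2.2, hs.1.2⟩, fun hs =>
      ⟨⟨hs.one_le.trans hs.le_block, hs.block_le⟩, hs.one_le, hs.le_block⟩⟩
  have hnd : ∀ {κ p}, BlockIndex n κ p → nd κ p - 1 + 1 = nd κ p ∧ nd κ p - 1 < Dim n := by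
    intro κ p hκp
    have := h.one_le hκp
    have := h.le_Dim hκp
    omega
  rw [Finset.sum_sigma']
  symm
  refine Finset.sum_bij (fun s hs => ⟨nd s.1 s.2 - 1, (hnd ((hmem s).1 hs)).2⟩)
    (fun _ _ => Finset.mem_univ _) ?_ ?_ ?_
  · rintro ⟨κ, p⟩ hs ⟨κ', p'⟩ hs' heq
    rw [hmem] at hs hs'
    rw [Fin.mk.injEq] at heq
    obtain ⟨rfl, rfl⟩ := h.injective hs hs' (by rw [← (hnd hs).1, heq, (hnd hs').1])
    rfl
  · intro j _
    obtain ⟨κ, p, hκp, hj⟩ := h.exists_eq (Nat.succ_pos j) j.2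
    exact ⟨⟨κ, p⟩, (hmem _).2 hκp, Fin.ext (by simp only [hj, Nat.succ_sub_one])⟩
  · intro s hs
    rw [hmem] at hs
    simp only [(hnd hs).1, blockCoord_eq hs t (j := ⟨_, (hnd hs).2⟩) (hnd hs).1.symm]

namespace BlockDiagram

variable {σ : ℕ → Bool} {n : ℕ} {w : List ℕ} {nd : ℕ → ℕ → ℕ} (h : BlockDiagram σ n w nd)
include h

lemma ite_lt_lamCoeff_eq {κ p κ' p' : ℕ} (hκp : BlockIndex n κ p) (hκp' : BlockIndex n κ' p') :
    (if nd κ p < nd κ' p' then lamCoeff w (nd κ p) (nd κ' p') else 0) =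
      if κ < κ' ∨ κ = κ' ∧ p < p' then
        columnCoeff (offset σ n κ + blockCol σ κ p) (offset σ n κ' + blockCol σ κ' p') else 0 := by
  rw [← h.letterAt_eq hκp, ← h.letterAt_eq hκp',
    show lamCoeff w _ _ = columnCoeff (letterAt w (nd κ p)) (letterAt w (nd κ' p')) from rfl]
  by_cases hnear : Near (letterAt w (nd κ p)) (letterAt w (nd κ' p'))
  · simp only [h.lt_iff hκp hκp' (Or.inl hnear)]
  · simp only [columnCoeff_of_not_near hnear, ite_self]

lemma lamIneq_iff (lam : ℕ → ℤ) (t : Fin (Dim n) → ℝ) {κ p : ℕ} (hκp : BlockIndex n κ p)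
    {j : Fin (Dim n)} (hj : nd κ p = j + 1) :
    LamIneq n w lam j t ↔ blockCoord n nd t κ p - blockCoord n nd t κ (p + 1) ≤
      residualWeight σ n lam (blockCoord n nd t) κ (offset σ n κ + blockCol σ κ p) := by
  have hsum := h.sum_eq (fun k => if nd κ p < k then lamCoeff w (nd κ p) k else 0) t
  rw [Finset.sum_congr rfl fun κ' hκ' => Finset.sum_congr rfl fun p' hp' => by
    rw [h.ite_lt_lamCoeff_eq hκp ⟨(Finset.mem_Ioc.1 hp').1, (Finset.mem_Ioc.1 hp').2,
      (Finset.mem_Ioc.1 hκ').2⟩]] at hsum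
  rw [sub_le_iff_le_add', ← lam_add_sum_later_eq σ lam hκp
    (blockCoord_of_not_blockIndex t (not_blockIndex_succ n κ)), ← hsum, ← h.letterAt_eq hκp,
    blockCoord_eq hκp t hj, hj]
  simp only [LamIneq, Nat.add_lt_add_iff_right]

theorem mem_lamCone_iff (lam : ℕ → ℤ) (t : Fin (Dim n) → ℝ) : t ∈ lamCone n w lam ↔
    ∀ κ p, BlockIndex n κ p → blockCoord n nd t κ p - blockCoord n nd t κ (p + 1) ≤
      residualWeight σ n lam (blockCoord n nd t) κ (offset σ n κ + blockCol σ κ p) := by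
  refine ⟨fun ht κ p hκp => ?_, fun ht j => ?_⟩
  · have := h.one_le hκp
    have := h.le_Dim hκp
    exact (h.lamIneq_iff lam t hκp (j := ⟨nd κ p - 1, by omega⟩) (by simp only; omega)).1 (ht _)
  · obtain ⟨κ, p, hκp, hj⟩ := h.exists_eq (Nat.succ_pos j) j.2
    exact (h.lamIneq_iff lam t hκp hj).2 (ht κ p hκp)

end BlockDiagram

/-! ### Gelfand–Cetlin patterns -/

lemma blockCol_blockCol {σ : ℕ → Bool} {κ p : ℕ} (h : p ≤ κ + 1) :
    blockCol σ κ (blockCol σ κ p) = p := by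
  unfold blockCol
  split_ifs <;> omega

lemma BlockIndex.blockCol {n κ p : ℕ} (h : BlockIndex n κ p) (σ : ℕ → Bool) :
    BlockIndex n κ (blockCol σ κ p) := by
  obtain ⟨hp, hpκ, hκn⟩ := h
  refine ⟨?_, ?_, hκn⟩ <;> unfold StringPolytope.blockCol <;> split_ifs <;> omega

/-- The slack of one of the two Gelfand–Cetlin inequalities between the entry in row `κ` and column
`blockCol σ κ p` of the pattern `X` and row `κ + 1`: of the upper bound if the `κ`-th block is
descending, and of the lower bound if it is ascending. -/
def patternSlack (σ : ℕ → Bool) (X : ℕ → ℕ → ℝ) (κ p : ℕ) : ℝ :=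
  if σ κ then X (κ + 1) (blockCol σ κ p) - X κ (blockCol σ κ p)
  else X κ (blockCol σ κ p) - X (κ + 1) (blockCol σ κ p + 1)

/-- The block coordinates `T` and the rows of the pattern `X` determine each other: the left-hand
sides of the string inequalities of `T` are slacks of Gelfand–Cetlin inequalities of `X`. -/
def IsPatternOf (σ : ℕ → Bool) (n : ℕ) (T X : ℕ → ℕ → ℝ) : Prop :=
  ∀ κ p, BlockIndex n κ p → T κ p - T κ (p + 1) = patternSlack σ X κ p

lemma patternSlack_nonneg_and_le_iff (σ : ℕ → Bool) (X : ℕ → ℕ → ℝ) (κ p : ℕ) :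
    (0 ≤ patternSlack σ X κ p ∧ patternSlack σ X κ p ≤
        X (κ + 1) (blockCol σ κ p) - X (κ + 1) (blockCol σ κ p + 1)) ↔
      X κ (blockCol σ κ p) ≤ X (κ + 1) (blockCol σ κ p) ∧
        X (κ + 1) (blockCol σ κ p + 1) ≤ X κ (blockCol σ κ p) := by
  unfold patternSlack
  split_ifs <;> constructor <;> rintro ⟨_, _⟩ <;> constructor <;> linarith

lemma residualWeight_self (σ : ℕ → Bool) (n : ℕ) (lam : ℕ → ℤ) (T : ℕ → ℕ → ℝ) (c : ℕ) :
    residualWeight σ n lam T n c = lam c := by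
  rw [residualWeight, Finset.Ioc_self, Finset.sum_empty, add_zero]

lemma residualWeight_pred (σ : ℕ → Bool) {n κ p : ℕ} (lam : ℕ → ℤ) {T : ℕ → ℕ → ℝ}
    (hp : BlockIndex n (κ + 1) p) (hT : ∀ κ p, ¬ BlockIndex n κ p → T κ p = 0) :
    residualWeight σ n lam T κ (offset σ n (κ + 1) + blockCol σ (κ + 1) p) =
      residualWeight σ n lam T (κ + 1) (offset σ n (κ + 1) + blockCol σ (κ + 1) p) +
        (T (κ + 1) (p - 1) - 2 * T (κ + 1) p + T (κ + 1) (p + 1)) := by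
  have hlast := sum_mul_columnCoeff_block σ (offset σ n (κ + 1)) hp.one_le hp.le_block
    (hT _ _ (not_blockIndex_zero n (κ + 1))) (hT _ _ (not_blockIndex_succ n (κ + 1)))
  rw [residualWeight, residualWeight, ← hlast, add_assoc, add_comm (Finset.sum _ _),
    ← Finset.sum_Ioc_consecutive _ κ.le_succ hp.block_le, Nat.Ioc_succ_singleton,
    Finset.sum_singleton]

/-- Passing from row `κ + 2` to row `κ + 1` changes the differences of consecutive entries by the
second differences of the `κ + 1`-st block. -/
lemma IsPatternOf.residualWeight_eq {σ : ℕ → Bool} {n : ℕ} {T X : ℕ → ℕ → ℝ}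
    (h : IsPatternOf σ n T X) (hT : ∀ κ p, ¬ BlockIndex n κ p → T κ p = 0) {lam : ℕ → ℤ}
    (htop : ∀ j, 1 ≤ j → j ≤ n → (lam j : ℝ) = X (n + 1) j - X (n + 1) (j + 1)) {κ j : ℕ}
    (hκj : BlockIndex n κ j) :
    residualWeight σ n lam T κ (offset σ n κ + j) = X (κ + 1) j - X (κ + 1) (j + 1) := by
  obtain ⟨hj, hjκ, hκn⟩ := hκj
  induction hκn using Nat.decreasingInduction generalizing j with
  | self => rw [offset_self, zero_add, residualWeight_self, htop j hj hjκ]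
  | of_succ κ hκ ih =>
    have hoff := offset_pred σ hκ
    cases hσ : σ (κ + 1) <;> simp only [hσ, if_true, if_false, Bool.false_eq_true] at hoff
    · have hcol : ∀ p, blockCol σ (κ + 1) p = p := fun p => by simp [blockCol, hσ]
      have hleft := h (κ + 1) j ⟨hj, by omega, hκ⟩
      have hright := h (κ + 1) (j + 1) ⟨by omega, by omega, hκ⟩
      have hres := residualWeight_pred σ lam (p := j + 1) ⟨by omega, by omega, hκ⟩ hT
      simp only [patternSlack, hσ, hcol, Bool.false_eq_true, if_false] at hleft hright hres
      rw [show offset σ n κ + j = offset σ n (κ + 1) + (j + 1) by omega, hres,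
        ih (by omega) (by omega), Nat.add_sub_cancel]
      linarith
    · obtain ⟨p, rfl⟩ : ∃ p, j = κ + 1 - p := ⟨κ + 1 - j, by omega⟩
      have hcol : blockCol σ (κ + 1) (p + 1) = κ + 1 - p := by
        rw [blockCol, if_pos hσ]
        omega
      have hcol' : blockCol σ (κ + 1) p = κ + 1 - p + 1 := by
        rw [blockCol, if_pos hσ]
        omega
      have hleft := h (κ + 1) (p + 1) ⟨by omega, by omega, hκ⟩
      have hright := h (κ + 1) p ⟨by omega, by omega, hκ⟩
      have hres := residualWeight_pred σ lam (p := p + 1) ⟨by omega, by omega, hκ⟩ hT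
      simp only [patternSlack, hσ, hcol, hcol', if_true] at hleft hright hres
      rw [show offset σ n κ + (κ + 1 - p) = offset σ n (κ + 1) + (κ + 1 - p) by omega, hres,
        ih (by omega) (by omega), Nat.add_sub_cancel]
      linarith

lemma gcX_top_sub (n : ℕ) (lam : ℕ → ℤ) (x : Fin (Dim n) → ℝ) {j : ℕ} (hj : j ≤ n) :
    gcX n lam x (n + 1) j - gcX n lam x (n + 1) (j + 1) = lam j := by
  simp only [gcX, if_true, if_pos hj]
  rw [← Finset.sum_Ioc_add_eq_sum_Icc hj, ← Finset.Icc_succ_left_eq_Ioc, Nat.succ_eq_succ]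
  split_ifs with hlt
  · exact add_sub_cancel_left _ _
  · rw [Finset.Icc_eq_empty (by omega), Finset.sum_empty]
    ring

lemma mem_GCPolytope_iff (σ : ℕ → Bool) {n : ℕ} {lam : ℕ → ℤ} {x : Fin (Dim n) → ℝ} :
    x ∈ GCPolytope n lam ↔ ∀ κ p, BlockIndex n κ p →
      0 ≤ patternSlack σ (gcX n lam x) κ p ∧ patternSlack σ (gcX n lam x) κ p ≤
        gcX n lam x (κ + 1) (blockCol σ κ p) - gcX n lam x (κ + 1) (blockCol σ κ p + 1) := by
  simp only [patternSlack_nonneg_and_le_iff]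
  refine ⟨fun hx κ p hκp => ?_, fun hx κ j _ hκn hj hjκ => ?_⟩
  · obtain ⟨hj, hjκ, hκn⟩ := hκp.blockCol σ
    exact hx κ _ (hj.trans hjκ) hκn hj hjκ
  · have := hx κ _ (BlockIndex.blockCol ⟨hj, hjκ, hκn⟩ σ)
    rwa [blockCol_blockCol (by omega)] at this

theorem BlockDiagram.mem_stringPolytope_iff {σ : ℕ → Bool} {n : ℕ} {w : List ℕ}
    {nd : ℕ → ℕ → ℕ} (h : BlockDiagram σ n w nd) {lam : ℕ → ℤ} {t x : Fin (Dim n) → ℝ}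
    (hpattern : IsPatternOf σ n (blockCoord n nd t) (gcX n lam x)) :
    t ∈ stringPolytope n w lam ↔ x ∈ GCPolytope n lam := by
  have hweight : ∀ κ p, BlockIndex n κ p → _ := fun κ p hκp =>
    hpattern.residualWeight_eq (fun _ _ => blockCoord_of_not_blockIndex t)
      (fun j _ hj => (gcX_top_sub n lam x hj).symm) (hκp.blockCol σ)
  rw [stringPolytope, Set.mem_inter_iff, h.mem_stringCone_iff, h.mem_lamCone_iff,
    mem_GCPolytope_iff σ, ← forall_and]
  refine forall_congr' fun κ => ?_
  rw [← forall_and]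
  refine forall_congr' fun p => ?_
  rw [← forall_and]
  refine forall_congr' fun hκp => ?_
  rw [hweight κ p hκp, ← hpattern κ p hκp, sub_nonneg]

/-! ### Unimodular equivalence -/

/-- The affine functions on `ℝ^m` with integral coefficients and integral constant term. -/
def integralAffine (m : ℕ) : AddSubgroup ((Fin m → ℝ) → ℝ) where
  carrier := {g | ∃ (c : Fin m → ℤ) (d : ℤ), ∀ x, g x = (∑ j, (c j : ℝ) * x j) + d}
  zero_mem' := ⟨0, 0, by simp⟩
  add_mem' := by
    rintro f g ⟨c, d, hf⟩ ⟨c', d', hg⟩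
    refine ⟨c + c', d + d', fun x => ?_⟩
    simp only [Pi.add_apply, hf, hg, Int.cast_add, add_mul, Finset.sum_add_distrib]
    ring
  neg_mem' := by
    rintro f ⟨c, d, hf⟩
    refine ⟨-c, -d, fun x => ?_⟩
    simp only [Pi.neg_apply, hf, Int.cast_neg, neg_mul, Finset.sum_neg_distrib, neg_add]

lemma intCast_mem_integralAffine {m : ℕ} (d : ℤ) : (fun _ => (d : ℝ)) ∈ integralAffine m :=
  ⟨0, d, by simp⟩

lemma apply_mem_integralAffine {m : ℕ} (i : Fin m) :
    (fun x : Fin m → ℝ => x i) ∈ integralAffine m :=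
  ⟨Pi.single i 1, 0, fun x => by simp [Pi.single_apply]⟩

lemma sum_mem_integralAffine {m : ℕ} {ι : Type*} (s : Finset ι) {g : (Fin m → ℝ) → ι → ℝ}
    (hg : ∀ i, (fun x => g x i) ∈ integralAffine m) :
    (fun x => ∑ i ∈ s, g x i) ∈ integralAffine m := by
  rw [← Finset.sum_fn s fun i x => g x i]
  exact sum_mem fun i _ => hg i

lemma exists_matrix_of_integralAffine {m : ℕ} {F : (Fin m → ℝ) → Fin m → ℝ}
    (hF : ∀ i, (fun x => F x i) ∈ integralAffine m) :
    ∃ (M : Matrix (Fin m) (Fin m) ℤ) (v : Fin m → ℤ), ∀ x,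
      F x = ((Int.castRingHom ℝ).mapMatrix M).mulVec x + fun i => (v i : ℝ) := by
  choose c v hF using hF
  exact ⟨Matrix.of c, v, fun x => funext fun i => hF i x⟩

lemma matrix_mul_eq_one_of_leftInverse {R : Type*} [Ring R] {m : ℕ}
    {A B : Matrix (Fin m) (Fin m) R} {v v' : Fin m → R}
    (h : Function.LeftInverse (fun y => B.mulVec y + v') (fun x => A.mulVec x + v)) :
    B * A = 1 := by
  have h₀ : B.mulVec v + v' = 0 := by
    simpa only [Matrix.mulVec_zero, zero_add] using h 0
  refine Matrix.ext_of_mulVec_single fun j => ?_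
  have hj := h (Pi.single j 1)
  simp only [Matrix.mulVec_add, add_assoc, h₀, add_zero] at hj
  rw [← Matrix.mulVec_mulVec, hj, Matrix.one_mulVec]

theorem unimodEquiv_of_leftInverse {m : ℕ} {P Q : Set (Fin m → ℝ)}
    {F G : (Fin m → ℝ) → Fin m → ℝ} (hF : ∀ i, (fun x => F x i) ∈ integralAffine m)
    (hG : ∀ i, (fun x => G x i) ∈ integralAffine m) (hGF : Function.LeftInverse G F)
    (hPQ : ∀ x, x ∈ P ↔ F x ∈ Q) : UnimodEquiv P Q := by
  obtain ⟨M, v, hM⟩ := exists_matrix_of_integralAffine hF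
  obtain ⟨M', v', hM'⟩ := exists_matrix_of_integralAffine hG
  obtain rfl : F = _ := funext hM
  obtain rfl : G = _ := funext hM'
  have hreal := matrix_mul_eq_one_of_leftInverse hGF
  rw [← map_mul, ← map_one (Int.castRingHom ℝ).mapMatrix] at hreal
  have hint : M' * M = 1 := Matrix.map_injective (RingHom.injective_int _) hreal
  have hsurj : ∀ y, ∃ x, ((Int.castRingHom ℝ).mapMatrix M).mulVec x + (fun i => (v i : ℝ)) = y :=
    fun y => ⟨((Int.castRingHom ℝ).mapMatrix M').mulVec (y - fun i => (v i : ℝ)), by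
      rw [Matrix.mulVec_mulVec, ← map_mul, mul_eq_one_comm.1 hint, map_one, Matrix.one_mulVec,
        sub_add_cancel]⟩
  refine ⟨M, v, Matrix.isUnit_det_of_left_inverse hint, Set.ext fun y => ?_⟩
  obtain ⟨x, rfl⟩ := hsurj y
  refine ⟨fun hx => ⟨x, (hPQ x).2 hx, rfl⟩, ?_⟩
  rintro ⟨x', hx', heq⟩
  rw [← heq]
  exact (hPQ x').1 hx'

lemma entry_mem_integralAffine (n a : ℕ) : (fun t => entry n t a) ∈ integralAffine (Dim n) := by
  by_cases h : a < Dim n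
  · simpa only [entry, dif_pos h] using apply_mem_integralAffine _
  · simp only [entry, dif_neg h]
    exact zero_mem _

lemma blockCoord_mem_integralAffine (n : ℕ) (nd : ℕ → ℕ → ℕ) (κ p : ℕ) :
    (fun t => blockCoord n nd t κ p) ∈ integralAffine (Dim n) := by
  by_cases h : BlockIndex n κ p
  · simpa only [blockCoord, if_pos h] using entry_mem_integralAffine n _
  · simp only [blockCoord, if_neg h]
    exact zero_mem _

/-- The row `n + 1` of every Gelfand–Cetlin pattern of highest weight `λ`. -/
def topRow (n : ℕ) (lam : ℕ → ℤ) (j : ℕ) : ℤ := if j ≤ n then ∑ i ∈ Finset.Icc j n, lam i else 0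

lemma gcX_top (n : ℕ) (lam : ℕ → ℤ) (x : Fin (Dim n) → ℝ) (j : ℕ) :
    gcX n lam x (n + 1) j = topRow n lam j := by
  rw [gcX, if_pos rfl, topRow]
  split_ifs <;> push_cast <;> rfl

lemma gcX_of_le {n κ : ℕ} (hκ : κ ≤ n) (lam : ℕ → ℤ) (x : Fin (Dim n) → ℝ) (j : ℕ) :
    gcX n lam x κ j = entry n x (blockStart κ + (j - 1)) := if_neg (by omega)

lemma gcX_mem_integralAffine {n κ : ℕ} (hκ : κ ≤ n + 1) (lam : ℕ → ℤ) (j : ℕ) :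
    (fun x => gcX n lam x κ j) ∈ integralAffine (Dim n) := by
  rcases hκ.eq_or_lt with rfl | hκ
  · simpa only [gcX_top] using intCast_mem_integralAffine _
  · simpa only [gcX_of_le (Nat.le_of_lt_succ hκ)] using entry_mem_integralAffine n _

/-- The row `n + 1 - d` of the pattern determined by the block coordinates `T`, built from the top
row downwards. -/
def patternRow (σ : ℕ → Bool) (n : ℕ) (lam : ℕ → ℤ) (T : ℕ → ℕ → ℝ) : ℕ → ℕ → ℝ
  | 0, j => topRow n lam j
  | d + 1, j =>
    let p := blockCol σ (n - d) j
    if σ (n - d) then patternRow σ n lam T d j - (T (n - d) p - T (n - d) (p + 1))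
    else patternRow σ n lam T d (j + 1) + (T (n - d) p - T (n - d) (p + 1))

lemma patternRow_mem_integralAffine (σ : ℕ → Bool) (n : ℕ) (lam : ℕ → ℤ) {m : ℕ}
    {T : (Fin m → ℝ) → ℕ → ℕ → ℝ} (hT : ∀ κ p, (fun t => T t κ p) ∈ integralAffine m) (d j : ℕ) :
    (fun t => patternRow σ n lam (T t) d j) ∈ integralAffine m := by
  induction d generalizing j with
  | zero => exact intCast_mem_integralAffine _
  | succ d ih =>
    have hstep := sub_mem (hT (n - d) (blockCol σ (n - d) j))
      (hT (n - d) (blockCol σ (n - d) j + 1))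
    by_cases hσ : σ (n - d)
    · simp only [patternRow, hσ, if_true]
      exact sub_mem (ih j) hstep
    · simp only [patternRow, hσ, if_false, Bool.false_eq_true]
      exact add_mem (ih (j + 1)) hstep

lemma isPatternOf_of_eq_patternRow {σ : ℕ → Bool} {n : ℕ} {lam : ℕ → ℤ} {T X : ℕ → ℕ → ℝ}
    (hX : ∀ κ j, BlockIndex n κ j → X κ j = patternRow σ n lam T (n + 1 - κ) j)
    (htop : ∀ j, X (n + 1) j = topRow n lam j) : IsPatternOf σ n T X := by
  have hX' : ∀ κ j, κ ≤ n → 1 ≤ j → j ≤ κ + 1 → X (κ + 1) j = patternRow σ n lam T (n - κ) j := by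
    intro κ j hκ hj hjκ
    rcases hκ.eq_or_lt with rfl | hκ
    · rw [htop, Nat.sub_self, patternRow]
    · rw [hX _ _ ⟨hj, hjκ, hκ⟩, Nat.succ_sub_succ]
  intro κ p hκp
  obtain ⟨hj, hjκ, hκn⟩ := hκp.blockCol σ
  rw [patternSlack, hX' κ _ hκn hj (by omega), hX' κ _ hκn (by omega) (by omega),
    hX κ _ ⟨hj, hjκ, hκn⟩, Nat.succ_sub hκn, patternRow, Nat.sub_sub_self hκn,
    blockCol_blockCol (by have := hκp.le_block; omega)]
  split_ifs <;> ring

/-- The `p`-th coordinate of the `κ`-th block of the point with pattern `X`, recovered by summing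
the string inequalities of the block. -/
def coordOfPattern (σ : ℕ → Bool) (X : ℕ → ℕ → ℝ) (κ p : ℕ) : ℝ :=
  ∑ q ∈ Finset.Icc p κ, patternSlack σ X κ q

lemma IsPatternOf.coordOfPattern_eq {σ : ℕ → Bool} {n : ℕ} {T X : ℕ → ℕ → ℝ}
    (h : IsPatternOf σ n T X) {κ p : ℕ} (hκp : BlockIndex n κ p) (hT : T κ (κ + 1) = 0) :
    coordOfPattern σ X κ p = T κ p := by
  have hterm : ∀ q ∈ Finset.Icc p κ, patternSlack σ X κ q = -(T κ (q + 1) - T κ q) := by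
    intro q hq
    obtain ⟨hpq, hqκ⟩ := Finset.mem_Icc.1 hq
    rw [← h κ q ⟨hκp.one_le.trans hpq, hqκ, hκp.block_le⟩, neg_sub]
  rw [coordOfPattern, Finset.sum_congr rfl hterm, Finset.sum_neg_distrib,
    Finset.sum_Icc_sub hκp.le_block, hT, zero_sub, neg_neg]

lemma coordOfPattern_mem_integralAffine (σ : ℕ → Bool) {n κ : ℕ} (hκ : κ ≤ n) (lam : ℕ → ℤ)
    (p : ℕ) : (fun x => coordOfPattern σ (gcX n lam x) κ p) ∈ integralAffine (Dim n) := by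
  refine sum_mem_integralAffine _ fun q => ?_
  have hrow := gcX_mem_integralAffine (hκ.trans n.le_succ) lam (blockCol σ κ q)
  have hrow' := gcX_mem_integralAffine (Nat.succ_le_succ hκ) lam
  by_cases hσ : σ κ
  · simp only [patternSlack, hσ, if_true]
    exact sub_mem (hrow' _) hrow
  · simp only [patternSlack, hσ, if_false, Bool.false_eq_true]
    exact sub_mem hrow (hrow' _)

lemma BlockNumbering.exists_blockIndex {n : ℕ} {nd : ℕ → ℕ → ℕ} (h : BlockNumbering n nd) :
    ∃ s : Fin (Dim n) → ℕ × ℕ, ∀ i, BlockIndex n (s i).1 (s i).2 ∧ nd (s i).1 (s i).2 = i + 1 := by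
  choose κ p hκp using fun i : Fin (Dim n) => h.exists_eq (Nat.succ_pos i) i.2
  exact ⟨fun i => (κ i, p i), hκp⟩

theorem BlockDiagram.unimodEquiv {σ : ℕ → Bool} {n : ℕ} {w : List ℕ} {nd : ℕ → ℕ → ℕ}
    (h : BlockDiagram σ n w nd) (lam : ℕ → ℤ) :
    UnimodEquiv (stringPolytope n w lam) (GCPolytope n lam) := by
  obtain ⟨s, hs⟩ := h.exists_blockIndex
  obtain ⟨r, hr⟩ := (blockNumbering_blockStart n).exists_blockIndex
  let F : (Fin (Dim n) → ℝ) → Fin (Dim n) → ℝ := fun t i =>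
    patternRow σ n lam (blockCoord n nd t) (n + 1 - (r i).1) (r i).2
  have hpattern : ∀ t, IsPatternOf σ n (blockCoord n nd t) (gcX n lam (F t)) := by
    refine fun t => isPatternOf_of_eq_patternRow (fun κ j hκj => ?_) (gcX_top n lam (F t))
    have := hκj.blockStart_add_le_Dim
    have := hκj.one_le
    have hlt : blockStart κ + (j - 1) < Dim n := by omega
    obtain ⟨hrκj, hrq⟩ := hr ⟨_, hlt⟩
    obtain ⟨hκ, hj⟩ := (blockNumbering_blockStart n).injective hκj hrκj
      (hrq.trans (by simp only; omega)).symm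
    rw [gcX_of_le hκj.block_le, entry, dif_pos hlt]
    simp only [F, ← hκ, ← hj]
  refine unimodEquiv_of_leftInverse (F := F)
    (G := fun x i => coordOfPattern σ (gcX n lam x) (s i).1 (s i).2)
    (fun i => patternRow_mem_integralAffine σ n lam (blockCoord_mem_integralAffine n nd) _ _)
    (fun i => coordOfPattern_mem_integralAffine σ (hs i).1.block_le lam _)
    (fun t => funext fun i => ?_) (fun t => h.mem_stringPolytope_iff (hpattern t))
  beta_reduce
  rw [(hpattern t).coordOfPattern_eq (hs i).1
    (blockCoord_of_not_blockIndex t (not_blockIndex_succ n _)), blockCoord_eq (hs i).1 t (hs i).2]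

/-- Theorem: Gelfand–Cetlin type string polytopes.
If there is a sequence `(σ_1,…,σ_n) ∈ {A,D}^n` with
`ind_{σ_k}(C_{σ_{k+1}} ∘ ⋯ ∘ C_{σ_n}(i)) = 0` for all `k = n, …, 1`, then for every
dominant integral weight `λ` the string polytope `Δ_i(λ)` is unimodularly equivalent
to the Gelfand–Cetlin polytope `GC(λ)`. -/
theorem statement16 (n : ℕ) (hn : 1 ≤ n) (i : List ℕ) (hi : IsReduced n i)
    (hsimp : SimplicialWord n i) (lam : ℕ → ℤ) (hlam : Dominant n lam) :
    UnimodEquiv (stringPolytope n i lam) (GCPolytope n lam) := by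
  obtain ⟨σ, f, hiso⟩ := hsimp.exists_diagramIso hi
  exact hiso.blockDiagram.unimodEquiv lam

end StringPolytope
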